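/- arXiv:1403.6927 — 4 statements merged into one kernel-verified Lean document; each statement's English description precedes it below -/
import Mathlib

section
/- For α > -1/2, λ ≥ 0 and every n ≥ 1, all zeros of the monic Gegenbauer–Sobolev polynomial Q_{n,λ}^{(α)} are real and simple; that is, Q_{n,λ}^{(α)} has exactly n distinct real roots. -/
open Polynomial MeasureTheory Real Set

/-- The Gegenbauer inner product `∫ f g (1-x²)^{α-1/2}` on `(-1,1)`. -/
noncomputable def gegInner (α : ℝ) (f g : Polynomial ℝ) : ℝ :=
  ∫ x in Set.Ioo (-1 : ℝ) 1, f.eval x * g.eval x * (1 - x ^ 2) ^ (α - 1/2)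

/-- `C` is the monic Gegenbauer polynomial of degree `n` for parameter `α`. -/
def IsMonicGegenbauer (α : ℝ) (n : ℕ) (C : Polynomial ℝ) : Prop :=
  C.Monic ∧ C.natDegree = n ∧
    ∀ p : Polynomial ℝ, p.degree < (n : ℕ) → gegInner α C p = 0

/-- The Gegenbauer–Sobolev inner product. -/
noncomputable def sobInner (α lam : ℝ) (f g : Polynomial ℝ) : ℝ :=
  gegInner α f g + lam * gegInner α (derivative f) (derivative g)

/-- `Q` is the monic Gegenbauer–Sobolev polynomial of degree `n`. -/
def IsMonicGegSobolev (α lam : ℝ) (n : ℕ) (Q : Polynomial ℝ) : Prop :=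
  Q.Monic ∧ Q.natDegree = n ∧
    ∀ p : Polynomial ℝ, p.degree < (n : ℕ) → sobInner α lam Q p = 0


noncomputable section


lemma gs_w_cont (α : ℝ) (hα : -1/2 < α) : Continuous (fun x : ℝ => (1 - x^2)^(α+1/2)) := by
  apply Continuous.rpow_const (by fun_prop)
  intro x; right; linarith

lemma gs_integrable (α : ℝ) (hα : -1/2 < α) (p : Polynomial ℝ) :
    IntegrableOn (fun x => p.eval x * (1 - x^2)^(α-1/2)) (Set.Ioo (-1:ℝ) 1) := by
  have hp : (-1:ℝ) < α - 1/2 := by linarith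
  have key : ∀ p : Polynomial ℝ, IntegrableOn (fun x => p.eval x * (1 - x^2)^(α-1/2)) (Set.Ioc (0:ℝ) 1) := by
    intro p
    have h1 : IntervalIntegrable (fun x : ℝ => (1 - x)^(α-1/2)) volume 0 1 := by
      have := (intervalIntegral.intervalIntegrable_rpow' (a := 1) (b := 0) hp).comp_sub_left 1
      simpa using this
    have h2 : IntervalIntegrable (fun x : ℝ => (1 - x)^(α-1/2) * (p.eval x * (1+x)^(α-1/2))) volume 0 1 := by
      apply h1.mul_continuousOn
      apply ContinuousOn.mul p.continuous.continuousOn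
      apply ContinuousOn.rpow_const (by fun_prop)
      intro x hx
      rw [Set.uIcc_of_le zero_le_one] at hx
      left; linarith [hx.1]
    rw [intervalIntegrable_iff_integrableOn_Ioc_of_le zero_le_one] at h2
    refine h2.congr_fun ?_ measurableSet_Ioc
    intro x hx
    simp only
    rw [show (1:ℝ) - x^2 = (1-x)*(1+x) by ring, Real.mul_rpow (by linarith [hx.2]) (by linarith [hx.1])]
    ring
  have k1 := key p
  have k2 : IntegrableOn (fun x => p.eval x * (1 - x^2)^(α-1/2)) (Set.Ico (-1:ℝ) 0) := by
    have := key (p.comp (-X))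
    rw [← integrable_indicator_iff measurableSet_Ioc] at this
    have h := this.comp_neg
    rw [← integrable_indicator_iff measurableSet_Ico]
    refine h.congr (Filter.Eventually.of_forall ?_)
    intro x
    simp only [Set.indicator, Set.mem_Ioc, Set.mem_Ico]
    congr 1
    · apply propext; constructor <;> rintro ⟨h1, h2⟩ <;> constructor <;> linarith
    · simp
  have k3 := (integrableOn_Icc_iff_integrableOn_Ioc (by simp [enorm_ne_top])).mpr k1
  exact (k2.union k3).mono_set (by
    intro x hx
    by_cases h : x < 0
    · left; exact ⟨hx.1.le, h⟩
    · right; exact ⟨not_lt.mp h, hx.2.le⟩)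

/-- The weighted integral as a linear functional. -/
def gsW (α : ℝ) (hα : -1/2 < α) : Polynomial ℝ →ₗ[ℝ] ℝ where
  toFun p := ∫ x in Set.Ioo (-1 : ℝ) 1, p.eval x * (1 - x ^ 2) ^ (α - 1/2)
  map_add' p q := by
    simp only [eval_add, add_mul]
    exact integral_add (gs_integrable α hα p) (gs_integrable α hα q)
  map_smul' c p := by
    simp only [eval_smul, smul_eq_mul, mul_assoc, RingHom.id_apply]
    exact integral_const_mul _ _

lemma gsW_pos (α : ℝ) (hα : -1/2 < α) (p : Polynomial ℝ) (hp : p ≠ 0)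
    (h : ∀ x ∈ Set.Ioo (-1:ℝ) 1, 0 ≤ p.eval x) : 0 < gsW α hα p := by
  have hw : ∀ x ∈ Set.Ioo (-1:ℝ) 1, 0 < (1 - x^2)^(α-1/2) := by
    intro x hx; apply Real.rpow_pos_of_pos; nlinarith [hx.1, hx.2]
  show 0 < ∫ x in Set.Ioo (-1 : ℝ) 1, p.eval x * (1 - x ^ 2) ^ (α - 1/2)
  rw [setIntegral_pos_iff_support_of_nonneg_ae]
  · have hsub : Set.Ioo (-1:ℝ) 1 \ (p.roots.toFinset : Set ℝ) ⊆ 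
        (Function.support fun x => p.eval x * (1 - x ^ 2) ^ (α - 1/2)) ∩ Set.Ioo (-1:ℝ) 1 := by
      rintro x ⟨hx, hr⟩
      refine ⟨?_, hx⟩
      simp [hp] at hr
      exact mul_ne_zero hr (hw x hx).ne'
    refine lt_of_lt_of_le ?_ (measure_mono hsub)
    rw [measure_sdiff_null (Set.Finite.measure_zero (Finset.finite_toSet _) _)]
    simp
  · rw [Filter.EventuallyLE, ae_restrict_iff' measurableSet_Ioo]
    exact Filter.Eventually.of_forall fun x hx => mul_nonneg (h x hx) (hw x hx).le
  · exact gs_integrable α hα p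

lemma gsW_neg (α : ℝ) (hα : -1/2 < α) (p : Polynomial ℝ) :
    gsW α hα (p.comp (-X)) = gsW α hα p := by
  show (∫ x in Set.Ioo (-1 : ℝ) 1, (p.comp (-X)).eval x * (1 - x ^ 2) ^ (α - 1/2)) = 
    ∫ x in Set.Ioo (-1 : ℝ) 1, p.eval x * (1 - x ^ 2) ^ (α - 1/2)
  rw [← integral_Ioc_eq_integral_Ioo, ← integral_Ioc_eq_integral_Ioo,
    ← intervalIntegral.integral_of_le (by norm_num), ← intervalIntegral.integral_of_le (by norm_num)]
  have := intervalIntegral.integral_comp_neg (a := -1) (b := 1) (fun x => p.eval x * (1 - x ^ 2) ^ (α - 1/2))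
  simpa using this

lemma gsW_parts (α : ℝ) (hα : -1/2 < α) (g : Polynomial ℝ) :
    gsW α hα ((1 - X^2) * derivative g - C (2*α+1) * X * g) = 0 := by
  show (∫ x in Set.Ioo (-1 : ℝ) 1, ((1 - X^2) * derivative g - C (2*α+1) * X * g).eval x * (1 - x ^ 2) ^ (α - 1/2)) = 0
  rw [← integral_Ioc_eq_integral_Ioo, ← intervalIntegral.integral_of_le (by norm_num)]
  rw [intervalIntegral.integral_eq_sub_of_hasDerivAt_of_le (f := fun x => (1 - x^2)^(α+1/2) * g.eval x) (by norm_num)]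
  · have : α + 1/2 ≠ 0 := by linarith
    have h0 := Real.zero_rpow this
    simp only [even_two, Even.neg_pow, one_pow, sub_self, h0, zero_mul]
  · exact ((gs_w_cont α hα).mul g.continuous).continuousOn
  · intro x hx
    have hpos : 0 < 1 - x^2 := by nlinarith [hx.1, hx.2]
    have h1 : HasDerivAt (fun x : ℝ => 1 - x^2) (-(2*x)) x := by
      simpa using (hasDerivAt_pow 2 x).const_sub 1
    have h2 := (h1.rpow_const (p := α + 1/2) (Or.inl hpos.ne')).mul (g.hasDerivAt x)
    refine h2.congr_deriv ?_
    have e : (1 - x^2)^(α+1/2) = (1 - x^2)^(α-1/2) * (1-x^2) := by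
      rw [← Real.rpow_add_one hpos.ne']; congr 1; ring
    rw [e, show α + 1/2 - 1 = α - 1/2 by ring]
    simp
    ring
  · rw [intervalIntegrable_iff_integrableOn_Ioo_of_le (by norm_num)]
    exact gs_integrable α hα _

lemma gs_sign (N : ℕ) : ∀ q : Polynomial ℝ, q ≠ 0 → q.natDegree = N →
    ∃ A : Finset ℝ, (∀ a ∈ A, a ∈ Set.Ioo (-1:ℝ) 0) ∧ (∏ a ∈ A, (X - C a)) ∣ q ∧
      ((∀ s ∈ Set.Ioo (-1:ℝ) 0, 0 ≤ (q * ∏ a ∈ A, (X - C a)).eval s) ∨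
       (∀ s ∈ Set.Ioo (-1:ℝ) 0, 0 ≤ (-(q * ∏ a ∈ A, (X - C a))).eval s)) := by
  classical
  induction N with
  | zero =>
    intro q hq hd
    refine ⟨∅, by simp, by simp, ?_⟩
    rw [eq_C_of_natDegree_eq_zero hd]
    simp only [Finset.prod_empty, mul_one, eval_C, eval_neg]
    rcases le_total 0 (q.coeff 0) with h | h
    · left; intros; exact h
    · right; intros; linarith
  | succ N ih =>
    intro q hq hd
    by_cases hr : ∃ a ∈ Set.Ioo (-1:ℝ) 0, q.IsRoot a
    · obtain ⟨a, ha, hra⟩ := hr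
      obtain ⟨g, rfl⟩ := dvd_iff_isRoot.mpr hra
      have hg : g ≠ 0 := right_ne_zero_of_mul hq
      have hgd : g.natDegree = N := by
        rw [natDegree_mul (X_sub_C_ne_zero a) hg, natDegree_X_sub_C] at hd
        omega
      obtain ⟨A, hA, hdv, hs⟩ := ih g hg hgd
      by_cases haA : a ∈ A
      · have hprod := Finset.mul_prod_erase A (fun a => (X - C a : Polynomial ℝ)) haA
        refine ⟨A.erase a, fun b hb => hA b (Finset.mem_of_mem_erase hb), ?_, ?_⟩
        · refine Dvd.dvd.mul_left ?_ _
          exact dvd_trans (Dvd.intro_left _ hprod) hdv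
        · have e : (X - C a) * g * ∏ x ∈ A.erase a, (X - C x) = g * ∏ x ∈ A, (X - C x) := by
            rw [← hprod]; ring
          rw [e]; exact hs
      · refine ⟨insert a A, ?_, ?_, ?_⟩
        · intro b hb
          rcases Finset.mem_insert.mp hb with rfl | hb
          · exact ha
          · exact hA b hb
        · rw [Finset.prod_insert haA]
          exact mul_dvd_mul_left _ hdv
        · rw [Finset.prod_insert haA]
          have e : ∀ s : ℝ, ((X - C a) * g * ((X - C a) * ∏ x ∈ A, (X - C x))).eval s
              = (s - a)^2 * (g * ∏ x ∈ A, (X - C x)).eval s := by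
            intro s; simp only [eval_mul, eval_sub, eval_X, eval_C]; ring
          rcases hs with hs | hs
          · left; intro s h; rw [e]; exact mul_nonneg (sq_nonneg _) (hs s h)
          · right; intro s h; rw [eval_neg, e]
            have := hs s h
            rw [eval_neg] at this
            nlinarith [mul_nonneg (sq_nonneg (s-a)) this]
    · push Not at hr
      refine ⟨∅, by simp, by simp, ?_⟩
      simp only [Finset.prod_empty, mul_one, eval_neg]
      by_contra hcon
      push Not at hcon
      obtain ⟨⟨x, hx, hx1⟩, ⟨y, hy, hy1⟩⟩ := hcon
      have := (isPreconnected_Ioo (a := (-1:ℝ)) (b := 0)).intermediate_value hx hy q.continuous.continuousOn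
      obtain ⟨z, hz, hz0⟩ := this ⟨hx1.le, (by linarith : (0:ℝ) ≤ eval y q)⟩
      exact hr z hz hz0

lemma gs_coeff_nonneg (A : Finset ℝ) (hA : ∀ a ∈ A, a ≤ 0) (k : ℕ) :
    0 ≤ (∏ a ∈ A, (X - C a)).coeff k := by
  classical
  induction A using Finset.induction_on generalizing k with
  | empty => simp [coeff_one]; split_ifs <;> norm_num
  | insert a A ha ih =>
    rw [Finset.prod_insert ha, sub_mul, coeff_sub, coeff_C_mul]
    have h1 := ih (fun b hb => hA b (Finset.mem_insert_of_mem hb))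
    have h2 := hA a (Finset.mem_insert_self _ _)
    have h3 : 0 ≤ (X * ∏ a ∈ A, (X - C a)).coeff k := by
      cases k with
      | zero => simp
      | succ k => rw [coeff_X_mul]; exact h1 k
    nlinarith [h1 k, mul_nonneg (neg_nonneg.mpr h2) (h1 k)]

lemma gs_coeff_nonneg' (p : Polynomial ℝ) (hp : ∀ k, 0 ≤ p.coeff k) (b : ℝ) (hb : b ≤ 0) (k : ℕ) :
    0 ≤ (p * (X - C b)).coeff k := by
  rw [mul_sub, coeff_sub, coeff_mul_C]
  have h3 : 0 ≤ (p * X).coeff k := by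
    cases k with
    | zero => simp
    | succ k => rw [coeff_mul_X]; exact hp k
  nlinarith [mul_nonneg (neg_nonneg.mpr hb) (hp k)]

lemma gs_abstract (J : Polynomial ℝ →ₗ[ℝ] ℝ)
    (hJ : ∀ p : Polynomial ℝ, p ≠ 0 → (∀ s ∈ Set.Ioo (-1:ℝ) 0, 0 ≤ p.eval s) → 0 < J p)
    (m : ℕ) (q : Polynomial ℝ) (hq : q.Monic) (hm : q.natDegree = m)
    (D : ℕ → ℝ) (hD0 : ∀ k, 0 ≤ D k) (hD : ∀ k, 1 ≤ k → 0 < D k) (c h : ℝ)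
    (h1 : ∀ k < m, J (q * X^k) = c * D k) (h2 : J (q * X^m) = h + c * D m)
    (h3 : J (q * q) ≤ h) :
    ∃ B : Finset ℝ, B.card = m ∧ (∀ b ∈ B, -1 < b) ∧ q = ∏ b ∈ B, (X - C b) := by
  classical
  obtain ⟨A, hA, ⟨g, hg⟩, hs⟩ := gs_sign m q hq.ne_zero hm
  set P := ∏ a ∈ A, (X - C a) with hP
  have hPm : P.Monic := monic_prod_of_monic _ _ fun a _ => monic_X_sub_C a
  have hPd : P.natDegree = A.card := by simp [hP]
  have hgm : g.Monic := hPm.of_mul_monic_left (hg ▸ hq)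
  have hdeg : A.card + g.natDegree = m := by
    rw [← hm, hg, hPm.natDegree_mul hgm, hPd]
  have hPc : ∀ k, 0 ≤ P.coeff k := gs_coeff_nonneg A (fun a ha => (hA a ha).2.le)
  let l : Polynomial ℝ → ℝ := fun p => ∑ k ∈ Finset.range m, p.coeff k * D k
  have hl : ∀ p : Polynomial ℝ, p.natDegree < m → J (q * p) = c * l p := by
    intro p hp
    conv_lhs => rw [p.as_sum_range' m hp]
    rw [Finset.mul_sum, map_sum, Finset.mul_sum]
    refine Finset.sum_congr rfl fun k hk => ?_
    rw [← smul_X_eq_monomial, mul_smul_comm, map_smul, h1 k (Finset.mem_range.mp hk), smul_eq_mul]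
    ring
  have hl0 : ∀ p : Polynomial ℝ, (∀ k, 0 ≤ p.coeff k) → 0 ≤ l p :=
    fun p hp => Finset.sum_nonneg fun k _ => mul_nonneg (hp k) (hD0 k)
  have hlq : J (q * q) = h + c * (l q + D m) := by
    have : q * q = ∑ k ∈ Finset.range m, q * monomial k (q.coeff k) + q * X^m := by
      conv_lhs => rw [q.as_sum_range' (m+1) (by omega)]
      conv_lhs => rw [← q.as_sum_range' (m+1) (by omega)]
      conv_lhs =>
        arg 2
        rw [q.as_sum_range' (m+1) (by omega)]
      rw [Finset.sum_range_succ, mul_add, Finset.mul_sum]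
      congr 2
      rw [← smul_X_eq_monomial, show q.coeff m = 1 by rw [← hm]; exact hq, one_smul]
    rw [this, map_add, h2, map_sum, mul_add, Finset.mul_sum]
    have : ∑ x ∈ Finset.range m, J (q * monomial x (q.coeff x)) = ∑ i ∈ Finset.range m, c * (q.coeff i * D i) := by
      refine Finset.sum_congr rfl fun k hk => ?_
      rw [← smul_X_eq_monomial, mul_smul_comm, map_smul, h1 k (Finset.mem_range.mp hk), smul_eq_mul]
      ring
    rw [this]; ring
  have hqP : q * P ≠ 0 := mul_ne_zero hq.ne_zero hPm.ne_zero
  rcases Nat.lt_or_ge 1 g.natDegree with hk | hk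
  · -- too few sign changes
    exfalso
    have hXd : ∀ b : ℝ, (P * (X - C b)).natDegree < m := by
      intro b
      rw [hPm.natDegree_mul (monic_X_sub_C b), natDegree_X_sub_C, hPd]; omega
    have e0 := hl _ (hXd 0)
    have e1 := hl _ (hXd (-1))
    have p0 := hl0 _ (gs_coeff_nonneg' P hPc 0 le_rfl)
    have p1 := hl0 _ (gs_coeff_nonneg' P hPc (-1) (by norm_num))
    have main : ∀ ε : ℝ, ε ≠ 0 → (∀ s ∈ Set.Ioo (-1:ℝ) 0, 0 ≤ ε * (q * P).eval s) →
        ε * J (q * (P * (X - C 0))) < 0 ∧ 0 < ε * J (q * (P * (X - C (-1)))) := by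
      intro ε hε hpos
      constructor
      · have := hJ ((-ε) • (q * (P * (X - C 0)))) (smul_ne_zero (by simpa using hε)
          (by rw [← mul_assoc]; exact mul_ne_zero hqP (X_sub_C_ne_zero _))) (by
            intro s hs
            have := mul_nonneg (hpos s hs) (by linarith [hs.2] : 0 ≤ -s)
            simp only [eval_smul, eval_mul, eval_sub, eval_X, eval_C, smul_eq_mul] at this ⊢
            linarith)
        rw [map_smul, smul_eq_mul] at this
        linarith
      · have := hJ (ε • (q * (P * (X - C (-1))))) (smul_ne_zero hε
          (by rw [← mul_assoc]; exact mul_ne_zero hqP (X_sub_C_ne_zero _))) (by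
            intro s hs
            have := mul_nonneg (hpos s hs) (by linarith [hs.1] : 0 ≤ s + 1)
            simp only [eval_smul, eval_mul, eval_sub, eval_X, eval_C, smul_eq_mul] at this ⊢
            linarith)
        rwa [map_smul, smul_eq_mul] at this
    have fin : ∃ ε : ℝ, ε * J (q * (P * (X - C 0))) < 0 ∧ 0 < ε * J (q * (P * (X - C (-1)))) := by
      rcases hs with hs | hs
      · exact ⟨1, main 1 one_ne_zero (by simpa using hs)⟩
      · exact ⟨-1, main (-1) (by norm_num) (by simpa using hs)⟩
    obtain ⟨ε, f0, f1⟩ := fin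
    rw [e0] at f0; rw [e1] at f1
    rcases le_total 0 (ε * c) with hc | hc
    · nlinarith [mul_nonneg hc p0]
    · nlinarith [mul_nonneg (neg_nonneg.mpr hc) p1]
  · rcases Nat.eq_zero_or_pos g.natDegree with h0 | hpos
    · have : g = 1 := eq_one_of_monic_natDegree_zero hgm h0
      refine ⟨A, by omega, fun b hb => (hA b hb).1, ?_⟩
      rw [hg, this, mul_one]
    · have hd1 : g.natDegree = 1 := by omega
      obtain ⟨b, hb⟩ : ∃ b : ℝ, g = X - C b := by
        refine ⟨-g.coeff 0, ?_⟩
        have := hgm.as_sum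
        rw [hd1] at this
        simp at this
        rw [this]; simp
      subst hb
      have hbA : b ∉ A := by
        intro hbA
        have hbI := hA b hbA
        have ev : ∀ s : ℝ, (q * P).eval s = (s - b) * (P.eval s)^2 := by
          intro s
          rw [hg]
          simp only [eval_mul, eval_sub, eval_X, eval_C]; ring
        have hinf : ∀ u v : ℝ, u < v → (∀ s ∈ Set.Ioo u v, P.eval s = 0) → False := by
          intro u v huv hz
          exact hPm.ne_zero (eq_zero_of_infinite_isRoot P
            ((Set.Ioo_infinite huv).mono fun s hs => hz s hs))
        rcases hs with hs | hs
        · refine hinf (-1) b hbI.1 fun s hsI => ?_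
          have h5 := hs s ⟨hsI.1, hsI.2.trans hbI.2⟩
          rw [ev] at h5
          by_contra hne
          have := mul_pos_of_neg_of_neg (sub_neg.mpr hsI.2) (neg_neg_of_pos (pow_pos (abs_pos.mpr hne) 2))
          rw [sq_abs] at this
          linarith
        · refine hinf b 0 hbI.2 fun s hsI => ?_
          have h5 := hs s ⟨hbI.1.trans hsI.1, hsI.2⟩
          rw [eval_neg, ev] at h5
          by_contra hne
          have := mul_pos (sub_pos.mpr hsI.1) (pow_pos (abs_pos.mpr hne) 2)
          rw [sq_abs] at this
          linarith
      have hb1 : -1 < b := by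
        by_contra hb1
        push Not at hb1
        have f1 : 0 < J (q * P) := by
          apply hJ _ hqP
          intro s hs
          rw [hg]
          simp only [eval_mul, eval_sub, eval_X, eval_C]
          nlinarith [mul_nonneg (sq_nonneg (eval s P)) (by linarith [hs.1] : 0 ≤ s - b)]
        rw [hl P (by omega)] at f1
        have f2 := hl0 P hPc
        have f3 : 0 < c := by
          by_contra hc
          nlinarith [mul_nonneg (neg_nonneg.mpr (not_lt.mp hc)) f2]
        have f4 : 0 ≤ l q := hl0 q (by rw [hg]; exact gs_coeff_nonneg' P hPc b (by linarith))
        have f5 := hD m (by omega)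
        have := mul_pos f3 (by linarith : 0 < l q + D m)
        linarith
      refine ⟨insert b A, ?_, ?_, ?_⟩
      · rw [Finset.card_insert_of_notMem hbA]; omega
      · intro a ha
        rcases Finset.mem_insert.mp ha with rfl | ha
        · exact hb1
        · exact (hA a ha).1
      · rw [Finset.prod_insert hbA, hg, mul_comm]

lemma gs_comp_neg_X_coeff (f : Polynomial ℝ) (k : ℕ) : (f.comp (-X)).coeff k = (-1)^k * f.coeff k := by
  have : (-X : Polynomial ℝ) = C (-1) * X := by simp
  rw [this, comp_C_mul_X_coeff, mul_comm]

lemma gs_parity_even (f : Polynomial ℝ) (h : f.comp (-X) = f) : ∃ g : Polynomial ℝ, f = g.comp (X^2) := by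
  refine ⟨contract 2 f, ?_⟩
  rw [← expand_eq_comp_X_pow]
  ext k
  rw [coeff_expand (by norm_num), coeff_contract (by norm_num)]
  split_ifs with hk
  · rw [Nat.div_mul_cancel hk]
  · have h1 : (f.comp (-X)).coeff k = (-1)^k * f.coeff k := gs_comp_neg_X_coeff f k
    rw [h, (Nat.odd_iff.mpr (by omega)).neg_one_pow] at h1
    linarith

lemma gs_parity_odd (f : Polynomial ℝ) (h : f.comp (-X) = -f) : ∃ g : Polynomial ℝ, f = X * g.comp (X^2) := by
  have h0 : f.coeff 0 = 0 := by
    have := congrArg (fun p => coeff p 0) h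
    simp only [coeff_zero_eq_eval_zero, eval_comp, eval_neg, eval_X, neg_zero] at this
    rw [coeff_zero_eq_eval_zero]; linarith
  obtain ⟨g, rfl⟩ := X_dvd_iff.mpr h0
  have hg : g.comp (-X) = g := by
    rw [mul_comp, X_comp, neg_mul, neg_inj] at h
    exact mul_left_cancel₀ X_ne_zero h
  obtain ⟨k, hk⟩ := gs_parity_even g hg
  exact ⟨k, by rw [← hk]⟩

lemma gs_sob_eq (α lam : ℝ) (hα : -1/2 < α) (f g : Polynomial ℝ) :
    sobInner α lam f g = gsW α hα (f * g) + lam * gsW α hα (derivative f * derivative g) := by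
  simp [sobInner, gegInner, gsW]

lemma gsW_sq_nonneg (α : ℝ) (hα : -1/2 < α) (f : Polynomial ℝ) : 0 ≤ gsW α hα (f * f) := by
  by_cases h : f = 0
  · simp [h]
  · exact (gsW_pos α hα _ (mul_ne_zero h h) fun x _ => by rw [eval_mul]; exact mul_self_nonneg _).le

lemma gs_parity (α lam : ℝ) (hα : -1/2 < α) (hlam : 0 ≤ lam) (n : ℕ)
    (Q : Polynomial ℝ) (hQ : IsMonicGegSobolev α lam n Q) :
    Q.comp (-X) = C ((-1)^n) * Q := by
  obtain ⟨hm, hd, ho⟩ := hQ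
  have hsign : ((-1:ℝ)^n) * (-1)^n = 1 := by rw [← mul_pow]; norm_num
  set R := C ((-1)^n) * Q.comp (-X) with hR
  have hRd : (Q - R).degree < (n:ℕ) := by
    rw [degree_lt_iff_coeff_zero]
    intro k hk
    have e : R.coeff k = (-1)^n * ((-1)^k * Q.coeff k) := by rw [hR, coeff_C_mul, gs_comp_neg_X_coeff]
    rw [coeff_sub, e]
    rcases hk.eq_or_lt with rfl | hk
    · rw [← mul_assoc, hsign]; ring
    · rw [coeff_eq_zero_of_natDegree_lt (by omega)]; simp
  have hRo : ∀ p : Polynomial ℝ, p.degree < (n : ℕ) → sobInner α lam R p = 0 := by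
    intro p hp
    have hp' : (p.comp (-X)).degree < (n:ℕ) := by
      rw [degree_lt_iff_coeff_zero] at hp ⊢
      intro k hk
      rw [gs_comp_neg_X_coeff, hp k hk, mul_zero]
    have h1 := ho _ hp'
    rw [gs_sob_eq α lam hα] at h1 ⊢
    rw [← gsW_neg α hα (Q * _), ← gsW_neg α hα (derivative Q * _)] at h1
    have hc : ∀ f : Polynomial ℝ, (f.comp (-X)).comp (-X) = f := by
      intro f; rw [comp_assoc]; simp
    have e1 : (Q * p.comp (-X)).comp (-X) = Q.comp (-X) * p := by rw [mul_comp, hc]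
    have e2 : (derivative Q * derivative (p.comp (-X))).comp (-X) = derivative (Q.comp (-X)) * derivative p := by
      rw [mul_comp, derivative_comp, derivative_comp, mul_comp, hc]; simp
    rw [e1, e2] at h1
    have e3 : R * p = ((-1:ℝ)^n) • (Q.comp (-X) * p) := by rw [hR, smul_eq_C_mul, mul_assoc]
    have e4 : derivative R * derivative p = ((-1:ℝ)^n) • (derivative (Q.comp (-X)) * derivative p) := by
      rw [hR, derivative_C_mul, smul_eq_C_mul, mul_assoc]
    rw [e3, e4, map_smul, map_smul, smul_eq_mul, smul_eq_mul]
    linear_combination ((-1:ℝ)^n) * h1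
  have h0 : sobInner α lam (Q - R) (Q - R) = 0 := by
    have a1 := ho _ hRd
    have a2 := hRo _ hRd
    rw [gs_sob_eq α lam hα] at a1 a2 ⊢
    rw [sub_mul, map_sub, derivative_sub, sub_mul, map_sub, ← derivative_sub]
    linarith
  have hz : Q - R = 0 := by
    by_contra hne
    rw [gs_sob_eq α lam hα] at h0
    have := gsW_pos α hα _ (mul_ne_zero hne hne) fun x _ => by rw [eval_mul]; exact mul_self_nonneg _
    have := mul_nonneg hlam (gsW_sq_nonneg α hα (derivative (Q - R)))
    linarith
  have : Q = R := sub_eq_zero.mp hz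
  conv_rhs => rw [this, hR, ← mul_assoc, ← C_mul, hsign, C_1, one_mul]

lemma gs_by_parts (α : ℝ) (hα : -1/2 < α) (Q r : Polynomial ℝ) :
    gsW α hα (derivative Q * ((1 - X^2) * r)) =
      - gsW α hα (Q * ((1 - X^2) * derivative r - C (2*α+1) * X * r)) := by
  have := gsW_parts α hα (Q * r)
  rw [eq_neg_iff_add_eq_zero, ← map_add, ← this, derivative_mul]
  congr 1; ring

/-- moment comparison sequence, even case -/
def gsDE (lam α : ℝ) : ℕ → ℝ
  | 0 => 0
  | 1 => 1
  | (k+2) => lam * (4*((k:ℝ)+2)*(k+1/2+α) * gsDE lam α k + 4*((k:ℝ)+2)*(k+1+α) * gsDE lam α (k+1))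

/-- moment comparison sequence, odd case -/
def gsDO (lam α : ℝ) : ℕ → ℝ
  | 0 => 1
  | 1 => 2 + 6 * lam * (α + 1/2)
  | (k+2) => lam * (4*((k:ℝ)+2)*(k+1/2+α) * gsDO lam α k + (2*(k:ℝ)+5)*(2*k+3+2*α) * gsDO lam α (k+1))

lemma gsDE_pos (lam α : ℝ) (hlam : 0 < lam) (hα : -1/2 < α) (k : ℕ) :
    0 ≤ gsDE lam α k ∧ 0 < gsDE lam α (k+1) := by
  induction k with
  | zero => simp [gsDE]
  | succ k ih =>
    refine ⟨ih.2.le, ?_⟩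
    have hk : (0:ℝ) ≤ k := Nat.cast_nonneg k
    have a1 : 0 < (k:ℝ)+1/2+α := by linarith
    have a2 : 0 < (k:ℝ)+1+α := by linarith
    have := ih.1
    have := ih.2
    rw [gsDE]
    positivity

lemma gsDO_pos (lam α : ℝ) (hlam : 0 < lam) (hα : -1/2 < α) (k : ℕ) :
    0 < gsDO lam α k ∧ 0 < gsDO lam α (k+1) := by
  have a0 : 0 < α + 1/2 := by linarith
  induction k with
  | zero => simp only [gsDO]; constructor <;> positivity
  | succ k ih =>
    refine ⟨ih.2, ?_⟩
    have hk : (0:ℝ) ≤ k := Nat.cast_nonneg k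
    have a1 : 0 < (k:ℝ)+1/2+α := by linarith
    have a2 : 0 < 2*(k:ℝ)+3+2*α := by linarith
    have := ih.1
    have := ih.2
    rw [gsDO]
    positivity

lemma gs_S_pow_deriv (j : ℕ) : (X^2 - 1 : Polynomial ℝ) * derivative ((X^2-1 : Polynomial ℝ)^j)
    = C (2 * (j:ℝ)) * X * (X^2-1)^j := by
  cases j with
  | zero => simp
  | succ j =>
    rw [derivative_pow]
    simp only [derivative_sub, derivative_X_pow, derivative_one, C_mul, Nat.add_sub_cancel]
    simp
    ring

/-- even recursion -/
lemma gs_even_rec (α : ℝ) (hα : -1/2 < α) (Q : Polynomial ℝ) (k : ℕ) :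
    - gsW α hα (derivative Q * derivative ((X^2-1)^(k+2))) =
      4*((k:ℝ)+2)*(k+1/2+α) * gsW α hα (Q * (X^2-1)^k) + 
      4*((k:ℝ)+2)*(k+1+α) * gsW α hα (Q * (X^2-1)^(k+1)) := by
  have e1 : derivative ((X^2-1 : Polynomial ℝ)^(k+2)) = (1 - X^2) * (C (-2*((k:ℝ)+2)) * X * (X^2-1)^k) := by
    rw [derivative_pow]
    simp [C_ofNat]
    ring
  rw [e1, gs_by_parts, neg_neg]
  have key : Q * ((1 - X^2) * derivative (C (-2*((k:ℝ)+2)) * X * (X^2-1)^k) - C (2*α+1) * X * (C (-2*((k:ℝ)+2)) * X * (X^2-1)^k)) =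
      (4*((k:ℝ)+2)*(k+1/2+α)) • (Q * (X^2-1)^k) + (4*((k:ℝ)+2)*(k+1+α)) • (Q * (X^2-1)^(k+1)) := by
    rw [smul_eq_C_mul, smul_eq_C_mul]
    have e2 := gs_S_pow_deriv k
    have e3 : (1 - X^2) * derivative (C (-2*((k:ℝ)+2)) * X * (X^2-1)^k) = 
       C (-2*((k:ℝ)+2)) * ((1 - X^2) * (X^2-1)^k - X * (C (2 * (k:ℝ)) * X * (X^2-1)^k)) := by
      rw [← e2, derivative_mul, derivative_C_mul_X]; ring
    rw [e3]
    simp only [C_mul, C_add, C_neg, map_ofNat, map_natCast, C_1, pow_succ]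
    have hh : (2:Polynomial ℝ) * C (1/2 : ℝ) = 1 := by
      rw [← C_ofNat, ← C_mul]; norm_num
    generalize C (1/2 : ℝ) = c at hh ⊢
    linear_combination (-(2 * Q * ((k:Polynomial ℝ)+2) * (X^2-1)^k)) * hh
  rw [key, map_add, map_smul, map_smul, smul_eq_mul, smul_eq_mul]

lemma gs_odd_rec (α : ℝ) (hα : -1/2 < α) (Q : Polynomial ℝ) (k : ℕ) :
    - gsW α hα (derivative Q * derivative (X * (X^2-1)^(k+2))) =
      4*((k:ℝ)+2)*(k+1/2+α) * gsW α hα (Q * (X * (X^2-1)^k)) + 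
      (2*(k:ℝ)+5)*(2*k+3+2*α) * gsW α hα (Q * (X * (X^2-1)^(k+1))) := by
  have e0 : derivative ((X^2-1 : Polynomial ℝ)^(k+2)) = (1 - X^2) * (C (-2*((k:ℝ)+2)) * X * (X^2-1)^k) := by
    rw [derivative_pow]
    simp [C_ofNat]
    ring
  have e1 : derivative (X * (X^2-1 : Polynomial ℝ)^(k+2)) = (1 - X^2) * (C (-2*((k:ℝ)+2)) * X^2 * (X^2-1)^k - (X^2-1)^(k+1)) := by
    rw [derivative_mul, e0, derivative_X]
    ring
  rw [e1, gs_by_parts, neg_neg]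
  have key : Q * ((1 - X^2) * derivative (C (-2*((k:ℝ)+2)) * X^2 * (X^2-1)^k - (X^2-1)^(k+1)) - C (2*α+1) * X * (C (-2*((k:ℝ)+2)) * X^2 * (X^2-1)^k - (X^2-1)^(k+1))) =
      (4*((k:ℝ)+2)*(k+1/2+α)) • (Q * (X * (X^2-1)^k)) + ((2*(k:ℝ)+5)*(2*k+3+2*α)) • (Q * (X * (X^2-1)^(k+1))) := by
    rw [smul_eq_C_mul, smul_eq_C_mul]
    have e2 := gs_S_pow_deriv k
    have e2' := gs_S_pow_deriv (k+1)
    have e3 : (1 - X^2) * derivative (C (-2*((k:ℝ)+2)) * X^2 * (X^2-1)^k - (X^2-1)^(k+1)) = 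
       C (-2*((k:ℝ)+2)) * ((1 - X^2) * (2 * X) * (X^2-1)^k - X^2 * (C (2 * (k:ℝ)) * X * (X^2-1)^k))
        + (C (2 * ((k+1:ℕ):ℝ)) * X * (X^2-1)^(k+1)) := by
      rw [← e2, ← e2', derivative_sub, derivative_mul, derivative_C_mul, derivative_X_pow]
      simp [C_ofNat]
      ring
    rw [e3]
    push_cast
    simp only [C_mul, C_add, C_neg, map_ofNat, map_natCast, C_1, pow_succ]
    have hh : (2:Polynomial ℝ) * C (1/2 : ℝ) = 1 := by
      rw [← C_ofNat, ← C_mul]; norm_num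
    generalize C (1/2 : ℝ) = c at hh ⊢
    linear_combination (-(2 * Q * X * ((k:Polynomial ℝ)+2) * (X^2-1)^k)) * hh
  rw [key, map_add, map_smul, map_smul, smul_eq_mul, smul_eq_mul]

lemma gs_odd_one (α : ℝ) (hα : -1/2 < α) (Q : Polynomial ℝ) :
    - gsW α hα (derivative Q * derivative (X * (X^2-1)^1)) =
      - 2 * gsW α hα (derivative Q * derivative (X * (X^2-1)^0)) + 
      6 * (α + 1/2) * gsW α hα (Q * (X * (X^2-1)^0)) := by
  have e1 : derivative (X * (X^2-1)^1) = (1 - X^2) * C (-3 : ℝ) + C (2:ℝ) * derivative (X * (X^2-1)^0) := by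
    simp [C_ofNat]
    ring
  have e2 : derivative Q * ((1 - X^2) * C (-3 : ℝ) + C (2:ℝ) * derivative (X * (X^2-1)^0)) = 
    derivative Q * ((1 - X^2) * C (-3 : ℝ)) + (2:ℝ) • (derivative Q * derivative (X * (X^2-1)^0)) := by
    rw [smul_eq_C_mul]; ring
  rw [e1, e2, map_add, gs_by_parts, map_smul, smul_eq_mul]
  have e3 : Q * ((1 - X^2) * derivative (C (-3:ℝ)) - C (2*α+1) * X * C (-3:ℝ)) = (6 * (α+1/2)) • (Q * (X * (X^2-1)^0)) := by
    rw [smul_eq_C_mul, show 6 * (α+1/2) = (2*α+1)*3 by ring, derivative_C]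
    simp [C_ofNat]
    ring
  rw [e3, map_smul, smul_eq_mul]
  ring


lemma gs_moments (α lam : ℝ) (hα : -1/2 < α) (hlam : 0 ≤ lam) (n m : ℕ)
    (Q : Polynomial ℝ) (hQ : IsMonicGegSobolev α lam n Q) (P : ℕ → Polynomial ℝ)
    (hP : ∀ k < m, (P k).degree < (n : ℕ)) (hPm : (P m).Monic) (hPd : (P m).natDegree = n) :
    (∀ k < m, gsW α hα (Q * P k) = -lam * gsW α hα (derivative Q * derivative (P k))) ∧
    ∃ h, gsW α hα (Q * P m) = h + -lam * gsW α hα (derivative Q * derivative (P m)) ∧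
      gsW α hα (Q * Q) ≤ h := by
  obtain ⟨hm, hd, ho⟩ := hQ
  refine ⟨fun k hk => ?_, sobInner α lam Q (P m), ?_, ?_⟩
  · have := ho _ (hP k hk)
    rw [gs_sob_eq α lam hα] at this
    linarith
  · rw [gs_sob_eq α lam hα]; ring
  · have hdeg : (P m - Q).degree < (n : ℕ) := by
      rw [degree_lt_iff_coeff_zero]
      intro k hk
      rw [coeff_sub]
      rcases hk.eq_or_lt with rfl | hk
      · have e1 := hPm.coeff_natDegree
        have e2 := hm.coeff_natDegree
        rw [hPd] at e1
        rw [hd] at e2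
        rw [e1, e2, sub_self]
      · rw [coeff_eq_zero_of_natDegree_lt (by omega), coeff_eq_zero_of_natDegree_lt (by omega), sub_self]
    have := ho _ hdeg
    rw [gs_sob_eq α lam hα, mul_sub, map_sub, derivative_sub, mul_sub, map_sub] at this
    rw [gs_sob_eq α lam hα]
    have := mul_nonneg hlam (gsW_sq_nonneg α hα (derivative Q))
    linarith

lemma gs_S_natDegree : (X^2 - 1 : Polynomial ℝ).natDegree = 2 := by
  compute_degree!

lemma gs_S_monic : (X^2 - 1 : Polynomial ℝ).Monic := by
  monicity!

lemma gs_comp_ne_zero (p : Polynomial ℝ) (hp : p ≠ 0) : p.comp (X^2 - 1) ≠ 0 := by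
  intro h
  rcases comp_eq_zero_iff.mp h with h | ⟨_, h⟩
  · exact hp h
  · have := congrArg natDegree h
    rw [gs_S_natDegree, natDegree_C] at this
    omega

lemma gs_comp_nonneg (p : Polynomial ℝ) (h : ∀ s ∈ Ioo (-1:ℝ) 0, 0 ≤ p.eval s) :
    ∀ x ∈ Ioo (-1:ℝ) 1, 0 ≤ (p.comp (X^2-1)).eval x := by
  intro x hx
  have hc : IsClosed {s : ℝ | 0 ≤ p.eval s} := isClosed_le continuous_const p.continuous
  have h2 : closure (Ioo (-1:ℝ) 0) ⊆ {s : ℝ | 0 ≤ p.eval s} := hc.closure_subset_iff.mpr h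
  rw [closure_Ioo (by norm_num)] at h2
  have : x^2 - 1 ∈ Icc (-1:ℝ) 0 := ⟨by nlinarith, by nlinarith [hx.1, hx.2]⟩
  simpa [eval_comp] using h2 this

/-- Even case. -/
lemma gs_even (α lam : ℝ) (hα : -1/2 < α) (hlam : 0 ≤ lam) (m : ℕ)
    (q : Polynomial ℝ) (hQ : IsMonicGegSobolev α lam (2*m) (q.comp (X^2-1))) :
    ∃ B : Finset ℝ, B.card = m ∧ (∀ b ∈ B, -1 < b) ∧ q = ∏ b ∈ B, (X - C b) := by
  have hqd : q.natDegree = m := by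
    have := hQ.2.1
    rw [natDegree_comp, gs_S_natDegree] at this
    omega
  have hqm : q.Monic := by
    have := hQ.1
    rw [Monic, leadingCoeff_comp (by rw [gs_S_natDegree]; norm_num), gs_S_monic.leadingCoeff] at this
    simpa [Monic] using this
  set Q := q.comp (X^2-1) with hQdef
  obtain ⟨h1, h, h2, h3⟩ := gs_moments α lam hα hlam (2*m) m Q hQ (fun k => (X^2-1)^k)
    (fun k hk => by
      rw [degree_eq_natDegree (gs_S_monic.pow k).ne_zero, natDegree_pow, gs_S_natDegree]
      exact_mod_cast (by omega : k * 2 < 2 * m))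
    (gs_S_monic.pow m) (by simp only [natDegree_pow, gs_S_natDegree]; omega)
  obtain ⟨D, c, hD0, hD, hc⟩ : ∃ (D : ℕ → ℝ) (c : ℝ), (∀ k, 0 ≤ D k) ∧ (∀ k, 1 ≤ k → 0 < D k) ∧
      ∀ k ≤ m, -lam * gsW α hα (derivative Q * derivative ((X^2-1)^k)) = c * D k := by
    rcases hlam.eq_or_lt with h0 | hpos
    · exact ⟨fun _ => 1, 0, by simp, by simp, by simp [← h0]⟩
    · refine ⟨gsDE lam α, -lam * gsW α hα (derivative Q * derivative ((X^2-1)^1)),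
        fun k => (gsDE_pos lam α hpos hα k).1, fun k hk => ?_, fun k => ?_⟩
      · obtain ⟨j, rfl⟩ := Nat.exists_eq_add_of_le' hk
        exact (gsDE_pos lam α hpos hα j).2
      · induction k using Nat.strong_induction_on with
        | _ k ih =>
          intro hk
          match k, ih, hk with
          | 0, _, _ => simp [gsDE]
          | 1, _, _ => simp [gsDE]
          | k+2, ih, hk =>
            have a1 := ih k (by omega) (by omega)
            have a2 := ih (k+1) (by omega) (by omega)
            have b1 := h1 k (by omega)
            have b2 := h1 (k+1) (by omega)
            have b3 := gs_even_rec α hα Q k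
            rw [gsDE]
            rw [a1] at b1
            rw [a2] at b2
            rw [b1, b2] at b3
            linear_combination lam * b3
  let J : Polynomial ℝ →ₗ[ℝ] ℝ := (gsW α hα).comp (aeval (X^2-1 : Polynomial ℝ)).toLinearMap
  have hJ : ∀ p, J p = gsW α hα (p.comp (X^2-1)) := fun p => by
    simp [J, comp, aeval_def, Polynomial.algebraMap_eq]
  refine gs_abstract J (fun p hp hs => ?_) m q hqm hqd D hD0 hD c h (fun k hk => ?_) ?_ ?_
  · rw [hJ]
    exact gsW_pos α hα _ (gs_comp_ne_zero p hp) (gs_comp_nonneg p hs)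
  · rw [hJ, mul_comp, X_pow_comp, ← hQdef, h1 k hk, hc k hk.le]
  · rw [hJ, mul_comp, X_pow_comp, ← hQdef, h2, hc m le_rfl]
  · rw [hJ, mul_comp, ← hQdef]; exact h3

/-- Odd case. -/
lemma gs_odd (α lam : ℝ) (hα : -1/2 < α) (hlam : 0 ≤ lam) (m : ℕ)
    (q : Polynomial ℝ) (hQ : IsMonicGegSobolev α lam (2*m+1) (X * q.comp (X^2-1))) :
    ∃ B : Finset ℝ, B.card = m ∧ (∀ b ∈ B, -1 < b) ∧ q = ∏ b ∈ B, (X - C b) := by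
  have hq0 : q ≠ 0 := by
    rintro rfl
    simpa using hQ.1.ne_zero
  have hqd : q.natDegree = m := by
    have := hQ.2.1
    rw [natDegree_X_mul (gs_comp_ne_zero q hq0), natDegree_comp, gs_S_natDegree] at this
    omega
  have hqm : q.Monic := by
    have := hQ.1
    rw [Monic, leadingCoeff_mul, leadingCoeff_X, one_mul,
      leadingCoeff_comp (by rw [gs_S_natDegree]; norm_num), gs_S_monic.leadingCoeff] at this
    simpa [Monic] using this
  set Q := X * q.comp (X^2-1) with hQdef
  have hnd : ∀ k, (X * (X^2-1)^k : Polynomial ℝ).natDegree = 2*k+1 := fun k => by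
    rw [natDegree_X_mul (gs_S_monic.pow k).ne_zero, natDegree_pow, gs_S_natDegree]; omega
  obtain ⟨h1, h, h2, h3⟩ := gs_moments α lam hα hlam (2*m+1) m Q hQ (fun k => X * (X^2-1)^k)
    (fun k hk => by
      rw [degree_eq_natDegree (monic_X.mul (gs_S_monic.pow k)).ne_zero, hnd]
      exact_mod_cast (by omega : 2 * k + 1 < 2 * m + 1))
    (monic_X.mul (gs_S_monic.pow m)) (hnd m)
  obtain ⟨D, c, hD0, hD, hc⟩ : ∃ (D : ℕ → ℝ) (c : ℝ), (∀ k, 0 ≤ D k) ∧ (∀ k, 1 ≤ k → 0 < D k) ∧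
      ∀ k ≤ m, -lam * gsW α hα (derivative Q * derivative (X * (X^2-1)^k)) = c * D k := by
    rcases hlam.eq_or_lt with h0 | hpos
    · exact ⟨fun _ => 1, 0, by simp, by simp, by simp [← h0]⟩
    · refine ⟨gsDO lam α, -lam * gsW α hα (derivative Q * derivative (X * (X^2-1)^0)),
        fun k => (gsDO_pos lam α hpos hα k).1.le, fun k hk => (gsDO_pos lam α hpos hα k).1, fun k => ?_⟩
      · induction k using Nat.strong_induction_on with
        | _ k ih =>
          intro hk
          match k, ih, hk with
          | 0, _, _ => simp only [gsDO, mul_one]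
          | 1, _, hk =>
            have b1 := h1 0 (by omega)
            have b3 := gs_odd_one α hα Q
            rw [b1] at b3
            rw [gsDO]
            linear_combination lam * b3
          | k+2, ih, hk =>
            have a1 := ih k (by omega) (by omega)
            have a2 := ih (k+1) (by omega) (by omega)
            have b1 := h1 k (by omega)
            have b2 := h1 (k+1) (by omega)
            have b3 := gs_odd_rec α hα Q k
            rw [gsDO]
            rw [a1] at b1
            rw [a2] at b2
            rw [b1, b2] at b3
            linear_combination lam * b3
  let J : Polynomial ℝ →ₗ[ℝ] ℝ := (gsW α hα).comp
    ((LinearMap.mulLeft ℝ (X^2 : Polynomial ℝ)).comp (aeval (X^2-1 : Polynomial ℝ)).toLinearMap)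
  have hJ : ∀ p, J p = gsW α hα (X^2 * p.comp (X^2-1)) := fun p => by
    simp [J, comp, aeval_def, Polynomial.algebraMap_eq]
  have hQk : ∀ k, X^2 * (q * X^k).comp (X^2-1) = Q * (X * (X^2-1)^k) := fun k => by
    rw [mul_comp, X_pow_comp, hQdef]; ring
  refine gs_abstract J (fun p hp hs => ?_) m q hqm hqd D hD0 hD c h (fun k hk => ?_) ?_ ?_
  · rw [hJ]
    refine gsW_pos α hα _ (mul_ne_zero (pow_ne_zero _ X_ne_zero) (gs_comp_ne_zero p hp)) fun x hx => ?_
    rw [eval_mul, eval_pow, eval_X]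
    exact mul_nonneg (sq_nonneg x) (gs_comp_nonneg p hs x hx)
  · rw [hJ, hQk, h1 k hk, hc k hk.le]
  · rw [hJ, hQk, h2, hc m le_rfl]
  · rw [hJ, mul_comp, show X^2 * (q.comp (X^2-1) * q.comp (X^2-1)) = Q * Q by rw [hQdef]; ring]
    exact h3

lemma gs_assemble (n : ℕ) (Q : Polynomial ℝ) (hm : Q.Monic) (hd : Q.natDegree = n)
    (R : Finset ℝ) (hR : R.card = n) (hr : ∀ x ∈ R, Q.eval x = 0) :
    ∃ r : Fin n → ℝ, StrictMono r ∧ Q = ∏ i, (X - C (r i)) := by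
  have hprod : ∏ x ∈ R, (X - C x) = Q := by
    have hmon : (∏ x ∈ R, (X - C x)).Monic := monic_prod_of_monic _ _ fun x _ => monic_X_sub_C x
    refine (eq_of_monic_of_dvd_of_natDegree_le hmon hm ?_ ?_).symm
    · refine Finset.prod_dvd_of_coprime ?_ fun x hx => dvd_iff_isRoot.mpr (hr x hx)
      intro x _ y _ hxy
      exact pairwise_coprime_X_sub_C (s := id) Function.injective_id hxy
    · rw [natDegree_prod_of_monic _ _ fun x _ => monic_X_sub_C x]; simp [hd, hR]
  refine ⟨R.orderEmbOfFin hR, (R.orderEmbOfFin hR).strictMono, ?_⟩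
  rw [← hprod]
  have := Finset.prod_map Finset.univ (R.orderEmbOfFin hR).toEmbedding (fun x => X - C x)
  rw [Finset.map_orderEmbOfFin_univ] at this
  simpa using this

lemma gs_root_finset (m : ℕ) (B : Finset ℝ) (hB : B.card = m) (hb : ∀ b ∈ B, -1 < b) :
    ∃ R : Finset ℝ, R.card = 2*m ∧ ∀ x ∈ R, x ≠ 0 ∧ x^2-1 ∈ B := by
  have hpos : ∀ b ∈ B, 0 < √(1+b) := fun b h => Real.sqrt_pos.mpr (by linarith [hb b h])
  have hinj : ∀ b ∈ B, ∀ c ∈ B, √(1+b) = √(1+c) → b = c := fun b h c h' e => by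
    have := (Real.sqrt_inj (by linarith [hb b h]) (by linarith [hb c h'])).mp e
    linarith
  refine ⟨B.image (fun b => √(1+b)) ∪ B.image (fun b => -√(1+b)), ?_, ?_⟩
  · rw [Finset.card_union_of_disjoint, Finset.card_image_of_injOn, Finset.card_image_of_injOn]
    · omega
    · intro b h c h' e
      exact hinj b h c h' (neg_injective e)
    · intro b h c h' e
      exact hinj b h c h' e
    · rw [Finset.disjoint_left]
      intro x hx hx'
      simp only [Finset.mem_image] at hx hx'
      obtain ⟨b, h, rfl⟩ := hx
      obtain ⟨c, h', e⟩ := hx'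
      linarith [hpos b h, hpos c h']
  · intro x hx
    simp only [Finset.mem_union, Finset.mem_image] at hx
    rcases hx with ⟨b, h, rfl⟩ | ⟨b, h, rfl⟩
    · refine ⟨(hpos b h).ne', ?_⟩
      rw [Real.sq_sqrt (by linarith [hb b h])]; simpa using h
    · refine ⟨by linarith [hpos b h] |> fun (h : -√(1+b) < 0) => h.ne, ?_⟩
      rw [neg_sq, Real.sq_sqrt (by linarith [hb b h])]; simpa using h

lemma gs_prod_comp_eval (B : Finset ℝ) (x : ℝ) (hx : x^2-1 ∈ B) :
    ((∏ b ∈ B, (X - C b)).comp (X^2-1)).eval x = 0 := by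
  rw [eval_comp, eval_prod]
  exact Finset.prod_eq_zero hx (by simp)

lemma gs_main (α lam : ℝ) (hα : -1/2 < α) (hlam : 0 ≤ lam) (n : ℕ)
    (Q : Polynomial ℝ) (hQ : IsMonicGegSobolev α lam n Q) :
    ∃ r : Fin n → ℝ, StrictMono r ∧ Q = ∏ i, (X - C (r i)) := by
  have hp := gs_parity α lam hα hlam n Q hQ
  have hshift : ∀ g : Polynomial ℝ, g.comp (X^2) = (g.comp (X+1)).comp (X^2-1) := fun g => by
    rw [comp_assoc]; simp
  rcases Nat.even_or_odd' n with ⟨m, rfl | rfl⟩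
  · obtain ⟨g, hg⟩ := gs_parity_even Q (by simpa using hp)
    rw [hshift] at hg
    subst hg
    obtain ⟨B, hB, hb, hq⟩ := gs_even α lam hα hlam m _ hQ
    obtain ⟨R, hR, hr⟩ := gs_root_finset m B hB hb
    refine gs_assemble _ _ hQ.1 hQ.2.1 R hR fun x hx => ?_
    rw [hq]
    exact gs_prod_comp_eval B x (hr x hx).2
  · obtain ⟨g, hg⟩ := gs_parity_odd Q (by simpa [pow_succ] using hp)
    rw [hshift] at hg
    subst hg
    obtain ⟨B, hB, hb, hq⟩ := gs_odd α lam hα hlam m _ hQ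
    obtain ⟨R, hR, hr⟩ := gs_root_finset m B hB hb
    refine gs_assemble _ _ hQ.1 hQ.2.1 (insert 0 R) ?_ fun x hx => ?_
    · rw [Finset.card_insert_of_notMem fun h => (hr 0 h).1 rfl, hR]
    · rcases Finset.mem_insert.mp hx with rfl | hx
      · simp
      · rw [eval_mul, hq, gs_prod_comp_eval B x (hr x hx).2, mul_zero]

end

/-- The zeros of the monic Gegenbauer–Sobolev polynomial are real and simple:
`Q` splits into `n` distinct real linear factors. -/
theorem gegSobolev_zeros_real_simple (α lam : ℝ) (hα : -1/2 < α) (hlam : 0 ≤ lam)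
    (n : ℕ) (hn : 1 ≤ n)
    (Q : Polynomial ℝ) (hQ : IsMonicGegSobolev α lam n Q) :
    ∃ r : Fin n → ℝ, StrictMono r ∧ Q = ∏ i, (X - Polynomial.C (r i)) := by
  exact gs_main α lam hα hlam n Q hQ
end

section
/- For -1/2 < α < 1/2, λ ≥ 0 and every n ≥ 1, the monic Gegenbauer–Sobolev polynomial Q_{n,λ}^{(α)} has at most two zeros outside the interval [-1, 1], and any zeros outside [-1,1] form a pair symmetric with respect to the origin: if x is a zero of Q_{n,λ}^{(α)} with |x| > 1, then -x is also a zero, and every other zero lies in [-1,1]. -/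
open Polynomial MeasureTheory Real Set

lemma w_int (α : ℝ) (h1 : -1/2 < α) (h2 : α < 1/2) :
    IntegrableOn (fun x : ℝ => (1 - x ^ 2) ^ (α - 1/2)) (Ioo (-1:ℝ) 1) := by
  have hs : -1 < α - 1/2 := by linarith
  have i0 : IntervalIntegrable (fun x : ℝ => x ^ (α - 1/2)) volume 0 2 :=
    intervalIntegral.intervalIntegrable_rpow' hs
  have i1 : IntervalIntegrable (fun x : ℝ => (1 - x) ^ (α - 1/2)) volume (-1) 1 := by
    have := (i0.comp_sub_left 1).symm
    norm_num at this
    exact this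
  have i2 : IntervalIntegrable (fun x : ℝ => (1 + x) ^ (α - 1/2)) volume (-1) 1 := by
    have := (i0.comp_add_left 1)
    norm_num at this
    exact this
  have i3 := (i1.add i2)
  rw [intervalIntegrable_iff_integrableOn_Ioo_of_le (by norm_num)] at i3
  refine Integrable.mono' i3 ?_ ?_
  · exact (by fun_prop : Measurable (fun x : ℝ => (1 - x ^ 2) ^ (α - 1/2))).aestronglyMeasurable
  · refine (ae_restrict_iff' measurableSet_Ioo).2 (Filter.Eventually.of_forall fun x hx => ?_)
    have a1 : 0 < 1 - x := by linarith [hx.2]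
    have a2 : 0 < 1 + x := by linarith [hx.1]
    have e : 1 - x ^ 2 = (1 - x) * (1 + x) := by ring
    have p1 := Real.rpow_pos_of_pos a1 (α - 1/2)
    have p2 := Real.rpow_pos_of_pos a2 (α - 1/2)
    rw [e, Real.mul_rpow a1.le a2.le, Real.norm_of_nonneg (by positivity)]
    change _ ≤ (1 - x) ^ (α - 1/2) + (1 + x) ^ (α - 1/2)
    rcases le_total 0 x with h | h
    · have := Real.rpow_le_one_of_one_le_of_nonpos (by linarith : 1 ≤ 1 + x) (by linarith : α - 1/2 ≤ 0)
      nlinarith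
    · have := Real.rpow_le_one_of_one_le_of_nonpos (by linarith : 1 ≤ 1 - x) (by linarith : α - 1/2 ≤ 0)
      nlinarith

lemma pw_int (α : ℝ) (h1 : -1/2 < α) (h2 : α < 1/2) (p : ℝ[X]) :
    IntegrableOn (fun x : ℝ => p.eval x * (1 - x ^ 2) ^ (α - 1/2)) (Ioo (-1:ℝ) 1) := by
  obtain ⟨M, hM⟩ := (isCompact_Icc (a := (-1:ℝ)) (b := 1)).exists_bound_of_continuousOn
    (f := fun x => p.eval x) p.continuous.continuousOn
  refine Integrable.bdd_mul (c := M) (w_int α h1 h2) p.continuous.aestronglyMeasurable ?_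
  exact (ae_restrict_iff' measurableSet_Ioo).2
    (Filter.Eventually.of_forall fun x hx => hM x (Ioo_subset_Icc_self hx))

lemma exists_J (α : ℝ) (h1 : -1/2 < α) (h2 : α < 1/2) :
    ∃ J : ℝ[X] →ₗ[ℝ] ℝ, ∀ p, J p = ∫ x in Ioo (-1:ℝ) 1, p.eval x * (1 - x ^ 2) ^ (α - 1/2) := by
  refine ⟨⟨⟨fun p => ∫ x in Ioo (-1:ℝ) 1, p.eval x * (1 - x ^ 2) ^ (α - 1/2), ?_⟩, ?_⟩, fun p => rfl⟩
  · intro p q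
    rw [← integral_add (pw_int α h1 h2 p) (pw_int α h1 h2 q)]
    simp only [eval_add, add_mul]
  · intro c p
    simp only [eval_smul, smul_eq_mul, mul_assoc, RingHom.id_apply]
    rw [integral_const_mul]

lemma J_nonneg (α : ℝ) (p : ℝ[X]) (hp : ∀ x ∈ Ioo (-1:ℝ) 1, 0 ≤ p.eval x) :
    0 ≤ ∫ x in Ioo (-1:ℝ) 1, p.eval x * (1 - x ^ 2) ^ (α - 1/2) := by
  refine setIntegral_nonneg measurableSet_Ioo fun x hx => mul_nonneg (hp x hx) ?_
  exact Real.rpow_nonneg (by nlinarith [hx.1, hx.2]) _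

lemma J_pos (α : ℝ) (h1 : -1/2 < α) (h2 : α < 1/2) (p : ℝ[X]) (hp : ∀ x ∈ Ioo (-1:ℝ) 1, 0 ≤ p.eval x)
    (h0 : p ≠ 0) :
    0 < ∫ x in Ioo (-1:ℝ) 1, p.eval x * (1 - x ^ 2) ^ (α - 1/2) := by
  have hw : ∀ x ∈ Ioo (-1:ℝ) 1, 0 < (1 - x ^ 2) ^ (α - 1/2) := fun x hx =>
    Real.rpow_pos_of_pos (by nlinarith [hx.1, hx.2]) _
  rw [setIntegral_pos_iff_support_of_nonneg_ae _ (pw_int α h1 h2 p)]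
  · have hfin : (p.rootSet ℝ).Finite := rootSet_finite p ℝ
    have : Ioo (-1:ℝ) 1 \ p.rootSet ℝ ⊆
      (Function.support fun x => p.eval x * (1 - x ^ 2) ^ (α - 1/2)) ∩ Ioo (-1:ℝ) 1 := by
      rintro x ⟨hx, hr⟩
      refine ⟨?_, hx⟩
      simp only [Function.mem_support]
      refine mul_ne_zero (fun h => hr ?_) (hw x hx).ne'
      rw [mem_rootSet]
      exact ⟨h0, by simpa using h⟩
    refine lt_of_lt_of_le ?_ (measure_mono this)
    rw [measure_sdiff_null (hfin.measure_zero _)]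
    simp
  · exact (ae_restrict_iff' measurableSet_Ioo).2
      (Filter.Eventually.of_forall fun x hx => mul_nonneg (hp x hx) (hw x hx).le)

lemma J_parts (α : ℝ) (h1 : -1/2 < α) (h2 : α < 1/2) (T : ℝ[X]) :
    ∫ x in Ioo (-1:ℝ) 1, ((1 - X ^ 2) * derivative T - C (2 * α + 1) * X * T).eval x *
      (1 - x ^ 2) ^ (α - 1/2) = 0 := by
  rw [← integral_Ioc_eq_integral_Ioo, ← intervalIntegral.integral_of_le (by norm_num)]
  rw [intervalIntegral.integral_eq_sub_of_hasDerivAt_of_le (by norm_num)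
    (f := fun x => T.eval x * (1 - x ^ 2) ^ (α + 1/2))]
  · norm_num
    rw [Real.zero_rpow (by linarith)]
    simp
  · refine T.continuous.continuousOn.mul (Continuous.continuousOn ?_)
    exact (by fun_prop : Continuous fun x : ℝ => 1 - x ^ 2).rpow_const (fun _ => Or.inr (by linarith))
  · intro x hx
    have hpos : 0 < 1 - x ^ 2 := by nlinarith [hx.1, hx.2]
    have d1 : HasDerivAt (fun x : ℝ => 1 - x ^ 2) (-(2 * x)) x := by
      simpa using (hasDerivAt_pow 2 x).const_sub 1
    have d2 := (T.hasDerivAt x).mul (d1.rpow_const (p := α + 1/2) (Or.inl hpos.ne'))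
    refine HasDerivAt.congr_deriv d2 ?_
    have e : (1 - x ^ 2) ^ (α + 1/2) = (1 - x ^ 2) ^ (α - 1/2) * (1 - x ^ 2) := by
      rw [← Real.rpow_add_one hpos.ne']; congr 1; ring
    rw [e, show α + 1/2 - 1 = α - 1/2 by ring]
    simp
    ring
  · rw [intervalIntegrable_iff_integrableOn_Ioo_of_le (by norm_num)]
    exact pw_int α h1 h2 _

lemma J_neg (α : ℝ) (p : ℝ[X]) :
    ∫ x in Ioo (-1:ℝ) 1, (p.comp (-X)).eval x * (1 - x ^ 2) ^ (α - 1/2) =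
    ∫ x in Ioo (-1:ℝ) 1, p.eval x * (1 - x ^ 2) ^ (α - 1/2) := by
  rw [← integral_Ioc_eq_integral_Ioo, ← intervalIntegral.integral_of_le (by norm_num),
    ← integral_Ioc_eq_integral_Ioo, ← intervalIntegral.integral_of_le (by norm_num)]
  have := intervalIntegral.integral_comp_neg (a := -1) (b := 1)
    (fun x : ℝ => p.eval x * (1 - x ^ 2) ^ (α - 1/2))
  simp only [neg_neg] at this
  rw [← this]
  simp

structure GJ (α : ℝ) (J : ℝ[X] →ₗ[ℝ] ℝ) : Prop where
  pos : ∀ p : ℝ[X], (∀ x ∈ Ioo (-1:ℝ) 1, 0 ≤ p.eval x) → p ≠ 0 → 0 < J p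
  parts : ∀ T : ℝ[X], J ((1 - X ^ 2) * derivative T - C (2 * α + 1) * X * T) = 0
  neg : ∀ p : ℝ[X], J (p.comp (-X)) = J p

noncomputable def BB (J : ℝ[X] →ₗ[ℝ] ℝ) (lam : ℝ) (f g : ℝ[X]) : ℝ :=
  J (f * g) + lam * J (derivative f * derivative g)

def IsOrth (J : ℝ[X] →ₗ[ℝ] ℝ) (lam : ℝ) (n : ℕ) (Q : ℝ[X]) : Prop :=
  Q.Monic ∧ Q.natDegree = n ∧ ∀ p : ℝ[X], p.degree < (n : ℕ) → BB J lam Q p = 0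

lemma BB_add_left (J : ℝ[X] →ₗ[ℝ] ℝ) (lam : ℝ) (f g h : ℝ[X]) :
    BB J lam (f + g) h = BB J lam f h + BB J lam g h := by
  simp [BB, add_mul]; ring
lemma BB_add_right (J : ℝ[X] →ₗ[ℝ] ℝ) (lam : ℝ) (f g h : ℝ[X]) :
    BB J lam h (f + g) = BB J lam h f + BB J lam h g := by
  simp [BB, mul_add]; ring
lemma BB_smul_left (J : ℝ[X] →ₗ[ℝ] ℝ) (lam c : ℝ) (f h : ℝ[X]) :
    BB J lam (c • f) h = c * BB J lam f h := by
  simp [BB]; ring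
lemma BB_smul_right (J : ℝ[X] →ₗ[ℝ] ℝ) (lam c : ℝ) (f h : ℝ[X]) :
    BB J lam h (c • f) = c * BB J lam h f := by
  simp [BB]; ring
lemma BB_sub_left (J : ℝ[X] →ₗ[ℝ] ℝ) (lam : ℝ) (f g h : ℝ[X]) :
    BB J lam (f - g) h = BB J lam f h - BB J lam g h := by
  simp [BB, sub_mul]; ring

lemma GJ.sq_nonneg {α : ℝ} {J : ℝ[X] →ₗ[ℝ] ℝ} (hJ : GJ α J) (f : ℝ[X]) : 0 ≤ J (f * f) := by
  by_cases h : f = 0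
  · simp [h]
  · exact (hJ.pos (f * f) (fun x _ => by rw [eval_mul]; exact mul_self_nonneg _)
      (mul_ne_zero h h)).le

lemma GJ.BB_pos {α : ℝ} {J : ℝ[X] →ₗ[ℝ] ℝ} (hJ : GJ α J) {lam : ℝ} (hl : 0 ≤ lam) (f : ℝ[X])
    (h : f ≠ 0) : 0 < BB J lam f f := by
  have h1 := hJ.pos (f * f) (fun x _ => by rw [eval_mul]; exact mul_self_nonneg _)
      (mul_ne_zero h h)
  have h2 := mul_nonneg hl (hJ.sq_nonneg (derivative f))
  unfold BB; linarith

lemma GJ.exists_orth {α : ℝ} {J : ℝ[X] →ₗ[ℝ] ℝ} (hJ : GJ α J) {lam : ℝ} (hl : 0 ≤ lam) (n : ℕ) :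
    ∃ Q, IsOrth J lam n Q := by
  let B : ℝ[X] →ₗ[ℝ] ℝ[X] →ₗ[ℝ] ℝ := LinearMap.mk₂ ℝ (BB J lam) (BB_add_left J lam)
    (BB_smul_left J lam) (fun h f g => BB_add_right J lam f g h)
    (fun c h f => BB_smul_right J lam c f h)
  let V := degreeLT ℝ n
  have : FiniteDimensional ℝ V := Module.Finite.equiv (degreeLTEquiv ℝ n).symm
  let φ : V →ₗ[ℝ] Module.Dual ℝ V := (B.domRestrict₁₂ V V)
  have hinj : Function.Injective φ := by
    rw [← LinearMap.ker_eq_bot, LinearMap.ker_eq_bot']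
    intro v hv
    by_contra hne
    have := hJ.BB_pos hl (v : ℝ[X]) (by simpa using hne)
    have h2 : φ v v = 0 := by rw [hv]; rfl
    change BB J lam v v = 0 at h2
    linarith
  have hsurj : Function.Surjective φ :=
    (LinearMap.injective_iff_surjective_of_finrank_eq_finrank
      (Subspace.dual_finrank_eq (K := ℝ) (V := V)).symm).1 hinj
  obtain ⟨r, hr⟩ := hsurj ((B (X ^ n)).domRestrict V)
  have hrd : (r : ℝ[X]).degree < n := mem_degreeLT.1 r.2
  refine ⟨X ^ n - (r : ℝ[X]), monic_X_pow_sub (by simpa using hrd), ?_, ?_⟩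
  · apply natDegree_eq_of_degree_eq_some
    rw [degree_sub_eq_left_of_degree_lt (by simpa using hrd)]; simp
  · intro p hp
    have := LinearMap.congr_fun hr ⟨p, mem_degreeLT.2 hp⟩
    change BB J lam r p = BB J lam (X ^ n) p at this
    rw [BB_sub_left, this, sub_self]

lemma IsOrth.unique {α : ℝ} {J : ℝ[X] →ₗ[ℝ] ℝ} (hJ : GJ α J) {lam : ℝ} (hl : 0 ≤ lam) {n : ℕ}
    {P Q : ℝ[X]} (hP : IsOrth J lam n P) (hQ : IsOrth J lam n Q) : P = Q := by
  by_contra hne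
  have hd : (P - Q).degree < n := by
    have := degree_sub_lt_left (p := P) (q := Q)
      (by rw [degree_eq_natDegree hP.1.ne_zero, degree_eq_natDegree hQ.1.ne_zero, hP.2.1, hQ.2.1])
      hP.1.ne_zero (by rw [hP.1.leadingCoeff, hQ.1.leadingCoeff])
    rwa [degree_eq_natDegree hP.1.ne_zero, hP.2.1] at this
  have := hJ.BB_pos hl (P - Q) (sub_ne_zero.2 hne)
  rw [BB_sub_left, hP.2.2 _ hd, hQ.2.2 _ hd] at this
  simp at this

lemma BB_neg {α : ℝ} {J : ℝ[X] →ₗ[ℝ] ℝ} (hJ : GJ α J) (lam : ℝ) (f g : ℝ[X]) :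
    BB J lam (f.comp (-X)) (g.comp (-X)) = BB J lam f g := by
  unfold BB
  rw [← hJ.neg (f * g), ← hJ.neg (derivative f * derivative g)]
  simp [derivative_comp]

lemma IsOrth.parity {α : ℝ} {J : ℝ[X] →ₗ[ℝ] ℝ} (hJ : GJ α J) {lam : ℝ} (hl : 0 ≤ lam) {n : ℕ}
    {Q : ℝ[X]} (hQ : IsOrth J lam n Q) : Q.comp (-X) = ((-1 : ℝ) ^ n) • Q := by
  have hinv : ∀ p : ℝ[X], (p.comp (-X)).comp (-X) = p := fun p => by simp [comp_assoc]
  have key : IsOrth J lam n (((-1 : ℝ) ^ n) • Q.comp (-X)) := by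
    have hnd : (Q.comp (-X)).natDegree = n := by rw [natDegree_comp]; simp [hQ.2.1]
    have hu : ((-1 : ℝ) ^ n) ≠ 0 := by simp
    refine ⟨?_, ?_, ?_⟩
    · rw [Monic, leadingCoeff, natDegree_smul _ hu, coeff_smul]
      change _ * (Q.comp (-X)).leadingCoeff = 1
      rw [leadingCoeff_comp (by simp), hQ.1.leadingCoeff, hQ.2.1]
      simp [← mul_pow]
    · rw [natDegree_smul _ hu, hnd]
    · intro p hp
      rw [BB_smul_left, ← hinv p, BB_neg hJ, hQ.2.2 _ ?_, mul_zero]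
      by_cases h0 : p = 0
      · simp [h0]
      · rw [degree_lt_iff_coeff_zero] at hp ⊢
        intro m hm
        rw [show (-X : ℝ[X]) = C (-1) * X by simp, comp_C_mul_X_coeff, hp m hm, zero_mul]
  have h := key.unique hJ hl hQ
  rw [← congrArg (fun q => ((-1 : ℝ) ^ n) • q) h]
  simp only [smul_smul, ← mul_pow]
  simp

lemma IsOrth.odd {α : ℝ} {J : ℝ[X] →ₗ[ℝ] ℝ} (hJ : GJ α J) {lam : ℝ} (hl : 0 ≤ lam) {n : ℕ}
    {Q : ℝ[X]} (hQ : IsOrth J lam n Q) : BB J lam Q (X ^ (n + 1)) = 0 := by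
  have h := BB_neg hJ lam Q (X ^ (n + 1))
  have e : (X ^ (n + 1) : ℝ[X]).comp (-X) = ((-1 : ℝ) ^ (n + 1)) • X ^ (n + 1) := by
    rw [X_pow_comp, neg_pow, smul_eq_C_mul]; simp
  rw [hQ.parity hJ hl, e, BB_smul_left, BB_smul_right, ← mul_assoc, ← pow_add,
    show n + (n + 1) = 2 * n + 1 by ring, pow_succ, pow_mul] at h
  norm_num at h
  linarith

lemma exists_antideriv (p : ℝ[X]) : ∃ S : ℝ[X], derivative S = p := by
  induction p using Polynomial.induction_on' with
  | add p q hp hq =>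
    obtain ⟨a, rfl⟩ := hp
    obtain ⟨b, rfl⟩ := hq
    exact ⟨a + b, by simp⟩
  | monomial n a =>
    refine ⟨monomial (n + 1) (a / (n + 1)), ?_⟩
    rw [derivative_monomial]
    have : (n : ℝ) + 1 ≠ 0 := by positivity
    simp; field_simp

/-- monic orthogonal polynomials are positive to the right of 1 -/
lemma IsOrth.pos_right {α : ℝ} {J : ℝ[X] →ₗ[ℝ] ℝ} (hJ : GJ α J) {n : ℕ}
    {Q : ℝ[X]} (hQ : IsOrth J 0 n Q) (x : ℝ) (hx : 1 < x) : 0 < Q.eval x := by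
  have noroot : ∀ a, 1 < a → Q.eval a ≠ 0 := by
    intro a ha h0
    obtain ⟨R, hR⟩ := dvd_iff_isRoot.2 h0
    have hR0 : R ≠ 0 := by rintro rfl; exact hQ.1.ne_zero (by simpa using hR)
    have hd : R.degree < n := by
      have : n = 1 + R.natDegree := by
        rw [← hQ.2.1, hR, natDegree_mul (X_sub_C_ne_zero a) hR0]; simp
      rw [← natDegree_lt_iff_degree_lt hR0]; omega
    have h1 := hQ.2.2 R hd
    have h2 := hJ.pos ((C a - X) * (R * R)) (fun x hx => by
      simp only [eval_mul, eval_sub, eval_C, eval_X]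
      exact mul_nonneg (by linarith [hx.2]) (mul_self_nonneg _))
      (mul_ne_zero (by rw [← neg_sub]; exact neg_ne_zero.2 (X_sub_C_ne_zero a)) (mul_ne_zero hR0 hR0))
    have e : (C a - X) * (R * R) = -(Q * R) := by rw [hR]; ring
    rw [e, map_neg] at h2
    simp only [BB, zero_mul, add_zero] at h1
    linarith
  by_contra hle
  push Not at hle
  have hn : n ≠ 0 := by
    rintro rfl
    rw [hQ.1.natDegree_eq_zero.1 hQ.2.1] at hle
    norm_num at hle
  have ht : Filter.Tendsto (fun x => Q.eval x) Filter.atTop Filter.atTop := by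
    apply Q.tendsto_atTop_of_leadingCoeff_nonneg
    · rw [← natDegree_pos_iff_degree_pos, hQ.2.1]; omega
    · rw [hQ.1.leadingCoeff]; norm_num
  obtain ⟨y, hy1, hy2⟩ := ((ht.eventually_ge_atTop 0).and (Filter.eventually_ge_atTop x)).exists
  obtain ⟨z, hz, hz0⟩ := intermediate_value_Icc hy2 Q.continuous.continuousOn ⟨hle, hy1⟩
  exact noroot z (by linarith [hz.1]) hz0

lemma GJ.S_facts {α : ℝ} {J : ℝ[X] →ₗ[ℝ] ℝ} (hJ : GJ α J) (h1 : -1/2 < α) {k : ℕ} {K S : ℝ[X]}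
    (hK : IsOrth J 0 (k + 1) K) (hS : derivative S = ((k : ℝ) + 2) • K) (hS0 : J S = 0) :
    (∀ j < k, J (S * X ^ j) = 0) ∧ J (S * X ^ k) ≤ 0 ∧ J (S * X ^ (k + 1)) = 0 := by
  have hrec : ∀ j : ℕ, ((j : ℝ) + 1 + 2 * α) * J (S * X ^ (j + 1)) =
      j * J (S * X ^ (j - 1)) + (k + 2) * (J (K * X ^ j) - J (K * X ^ (j + 2))) := by
    intro j
    have h := hJ.parts (S * X ^ j)
    have e : (1 - X ^ 2) * derivative (S * X ^ j) - C (2 * α + 1) * X * (S * X ^ j) =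
        ((k : ℝ) + 2) • (K * X ^ j) - ((k : ℝ) + 2) • (K * X ^ (j + 2)) +
        (j : ℝ) • (S * X ^ (j - 1)) - ((j : ℝ) + 1 + 2 * α) • (S * X ^ (j + 1)) := by
      rw [derivative_mul, hS, derivative_X_pow]
      simp only [smul_eq_C_mul]
      rcases j with _ | j
      · simp; ring
      · simp; ring
    rw [e] at h
    simp only [map_add, map_sub, map_smul, smul_eq_mul] at h
    linarith
  have hKo : ∀ j < k + 1, J (K * X ^ j) = 0 := by
    intro j hj
    have := hK.2.2 (X ^ j) (by rw [degree_X_pow]; exact_mod_cast hj)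
    simpa [BB] using this
  have hKodd : J (K * X ^ (k + 2)) = 0 := by
    simpa [BB] using hK.odd hJ le_rfl
  have hKK : 0 ≤ J (K * X ^ (k + 1)) := by
    have hd : (K - X ^ (k + 1)).degree < ((k + 1 : ℕ) : WithBot ℕ) := by
      have := degree_sub_lt_left (p := K) (q := X ^ (k + 1))
        (by rw [degree_X_pow, degree_eq_natDegree hK.1.ne_zero, hK.2.1]) hK.1.ne_zero
        (by rw [hK.1.leadingCoeff]; simp)
      rwa [degree_eq_natDegree hK.1.ne_zero, hK.2.1] at this
    have := hK.2.2 _ hd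
    simp only [BB, zero_mul, mul_sub, map_sub] at this
    linarith [hJ.sq_nonneg K]
  have hlow : ∀ j < k, J (S * X ^ j) = 0 := by
    intro j
    induction j using Nat.strong_induction_on with
    | _ j ih =>
      intro hj
      rcases j with _ | j
      · simpa using hS0
      · have h := hrec j
        rw [hKo j (by omega), hKo (j + 2) (by omega)] at h
        have h3 : (j : ℝ) * J (S * X ^ (j - 1)) = 0 := by
          rcases j with _ | j
          · simp
          · rw [show j + 1 - 1 = j by omega, ih j (by omega) (by omega), mul_zero]
        rw [h3] at h
        have hp : (0:ℝ) < (j : ℝ) + 1 + 2 * α := by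
          have : (0:ℝ) ≤ j := by positivity
          linarith
        have : ((j : ℝ) + 1 + 2 * α) * J (S * X ^ (j + 1)) = 0 := by linarith
        exact (mul_eq_zero.1 this).resolve_left hp.ne'
  refine ⟨hlow, ?_, ?_⟩
  · rcases k with _ | j
    · simp [hS0]
    · have h := hrec j
      rw [hKo j (by omega)] at h
      have h3 : (j : ℝ) * J (S * X ^ (j - 1)) = 0 := by
        rcases j with _ | j
        · simp
        · rw [show j + 1 - 1 = j by omega, hlow j (by omega), mul_zero]
      rw [h3] at h
      have hj : (0:ℝ) ≤ j := by positivity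
      have hp : (0:ℝ) < (j : ℝ) + 1 + 2 * α := by linarith
      by_contra hc
      push Not at hc
      have h5 := mul_pos hp hc
      have h6 : 0 ≤ (((j + 1 : ℕ) : ℝ) + 2) * J (K * X ^ (j + 1 + 1)) := mul_nonneg (by positivity) hKK
      have e2 : J (K * X ^ (j + 1 + 1)) = J (K * X ^ (j + 2)) := rfl
      rw [e2] at h6
      linarith
  · have h := hrec k
    rw [hKo k (by omega), hKodd] at h
    have h3 : (k : ℝ) * J (S * X ^ (k - 1)) = 0 := by
      rcases k with _ | j
      · simp
      · rw [show j + 1 - 1 = j by omega, hlow j (by omega), mul_zero]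
    rw [h3] at h
    have hp : (0:ℝ) < (k : ℝ) + 1 + 2 * α := by
      have : (0:ℝ) ≤ k := by positivity
      linarith
    have : ((k : ℝ) + 1 + 2 * α) * J (S * X ^ (k + 1)) = 0 := by linarith
    exact (mul_eq_zero.1 this).resolve_left hp.ne'

lemma functional_eval (L : ℝ[X] →ₗ[ℝ] ℝ) (k : ℕ) (h : ∀ j < k, L (X ^ j) = 0)
    (h' : L (X ^ (k + 1)) = 0) (p : ℝ[X]) (hp : p.degree < ((k + 2 : ℕ) : WithBot ℕ)) :
    L p = p.coeff k * L (X ^ k) := by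
  have hn : p.natDegree < k + 2 := by
    by_cases h0 : p = 0
    · simp [h0]
    · exact (natDegree_lt_iff_degree_lt h0).2 hp
  have hs := p.as_sum_range' (k + 2) hn
  have : L p = ∑ i ∈ Finset.range (k + 2), p.coeff i * L (X ^ i) := by
    conv_lhs => rw [hs]
    rw [map_sum]
    refine Finset.sum_congr rfl fun i _ => ?_
    rw [← C_mul_X_pow_eq_monomial, ← smul_eq_C_mul, map_smul, smul_eq_mul]
  rw [this, Finset.sum_range_succ, Finset.sum_range_succ, h', Finset.sum_eq_zero]
  · ring
  · intro i hi
    rw [h i (Finset.mem_range.1 hi), mul_zero]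

noncomputable def BBl (J : ℝ[X] →ₗ[ℝ] ℝ) (lam : ℝ) (f : ℝ[X]) : ℝ[X] →ₗ[ℝ] ℝ where
  toFun := BB J lam f
  map_add' g h := BB_add_right J lam g h f
  map_smul' c g := BB_smul_right J lam c g f

lemma GJ.step {α : ℝ} {J : ℝ[X] →ₗ[ℝ] ℝ} (hJ : GJ α J) (h1 : -1/2 < α) {lam : ℝ} (hl : 0 ≤ lam)
    {k : ℕ} {K R Q : ℝ[X]} (hK : IsOrth J 0 (k + 1) K) (hR : IsOrth J lam k R)
    (hQ : IsOrth J lam (k + 2) Q) :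
    ∃ t : ℝ, 0 ≤ t ∧ derivative Q = ((k : ℝ) + 2) • K + t • derivative R := by
  obtain ⟨S0, hS0⟩ := exists_antideriv (((k : ℝ) + 2) • K)
  have hJ1 : 0 < J 1 := hJ.pos 1 (by simp) one_ne_zero
  obtain ⟨S, hS, hSz⟩ : ∃ S, derivative S = ((k : ℝ) + 2) • K ∧ J S = 0 := by
    refine ⟨S0 - (J S0 / J 1) • 1, by simp [hS0], ?_⟩
    rw [map_sub, map_smul, smul_eq_mul, div_mul_cancel₀ _ hJ1.ne', sub_self]
  have hcoeff : ∀ m : ℕ, S.coeff (m + 1) * ((m : ℝ) + 1) = (k + 2) * K.coeff m := by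
    intro m
    have := congrArg (fun q => q.coeff m) hS
    simpa [coeff_derivative] using this
  have hSdeg : S.natDegree ≤ k + 2 := by
    rw [natDegree_le_iff_coeff_eq_zero]
    intro N hN
    obtain ⟨m, rfl⟩ : ∃ m, N = m + 1 := ⟨N - 1, by omega⟩
    have h := hcoeff m
    rw [coeff_eq_zero_of_natDegree_lt (p := K) (by rw [hK.2.1]; omega), mul_zero] at h
    exact (mul_eq_zero.1 h).resolve_right (by positivity)
  have hSc : S.coeff (k + 2) = 1 := by
    have h := hcoeff (k + 1)
    have hk : K.coeff (k + 1) = 1 := by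
      have := hK.1
      rwa [Monic, leadingCoeff, hK.2.1] at this
    rw [hk] at h
    push_cast at h
    have hp : (k : ℝ) + 2 ≠ 0 := by positivity
    apply mul_right_cancel₀ hp
    linear_combination h
  have hSm : S.Monic := monic_of_natDegree_le_of_coeff_eq_one _ hSdeg hSc
  have hSd : S.natDegree = k + 2 := le_antisymm hSdeg (le_natDegree_of_ne_zero (by rw [hSc]; simp))
  obtain ⟨f1, f2, f3⟩ := hJ.S_facts h1 hK hS hSz
  have hRR : 0 < BB J lam R (X ^ k) := by
    have hd : (X ^ k - R).degree < (k : WithBot ℕ) := by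
      have := degree_sub_lt_left (p := X ^ k) (q := R)
        (by rw [degree_X_pow, degree_eq_natDegree hR.1.ne_zero, hR.2.1]) (by simp)
        (by rw [hR.1.leadingCoeff]; simp)
      rwa [degree_X_pow] at this
    have h2 := hR.2.2 _ hd
    have h3 := hJ.BB_pos hl R hR.1.ne_zero
    have h4 := BB_add_right J lam (X ^ k - R) R R
    rw [sub_add_cancel, h2] at h4
    linarith
  refine ⟨-J (S * X ^ k) / BB J lam R (X ^ k), div_nonneg (by linarith) hRR.le, ?_⟩
  set t := -J (S * X ^ k) / BB J lam R (X ^ k) with ht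
  have htt : t * BB J lam R (X ^ k) = -J (S * X ^ k) := div_mul_cancel₀ _ hRR.ne'
  have hRd : (t • R).degree < S.degree := by
    refine lt_of_le_of_lt (degree_smul_le _ _) ?_
    rw [degree_eq_natDegree hR.1.ne_zero, degree_eq_natDegree hSm.ne_zero, hR.2.1, hSd]
    exact_mod_cast (by omega : k < k + 2)
  have hO : IsOrth J lam (k + 2) (S + t • R) := by
    refine ⟨hSm.add_of_left hRd, ?_, ?_⟩
    · rw [natDegree_add_eq_left_of_degree_lt hRd, hSd]
    · intro p hp
      rw [BB_add_left, BB_smul_left]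
      have e1 : BB J lam R p = p.coeff k * BB J lam R (X ^ k) :=
        functional_eval (BBl J lam R) k
          (fun j hj => hR.2.2 (X ^ j) (by rw [degree_X_pow]; exact_mod_cast hj)) (hR.odd hJ hl) p hp
      have e2 : J (S * p) = p.coeff k * J (S * X ^ k) :=
        functional_eval (J ∘ₗ LinearMap.mulLeft ℝ S) k f1 f3 p hp
      have hdp : (derivative p).degree < ((k + 1 : ℕ) : WithBot ℕ) := by
        rw [degree_lt_iff_coeff_zero] at hp ⊢
        intro m hm
        rw [coeff_derivative, hp (m + 1) (by omega), zero_mul]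
      have e3 : J (K * derivative p) = 0 := by
        have := hK.2.2 _ hdp
        simpa [BB] using this
      have e4 : BB J lam S p = J (S * p) := by
        simp [BB, hS, e3]
      rw [e4, e2, e1]
      linear_combination p.coeff k * htt
  rw [hQ.unique hJ hl hO, derivative_add, hS, derivative_smul]

lemma GJ.deriv_nonneg {α : ℝ} {J : ℝ[X] →ₗ[ℝ] ℝ} (hJ : GJ α J) (h1 : -1/2 < α) {lam : ℝ}
    (hl : 0 ≤ lam) (n : ℕ) : ∀ Q, IsOrth J lam n Q → ∀ x, 1 < x →
      0 ≤ (derivative Q).eval x ∧ (1 ≤ n → 0 < (derivative Q).eval x) := by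
  induction n using Nat.strong_induction_on with
  | _ n ih =>
    intro Q hQ x hx
    rcases n with _ | _ | k
    · have := hQ.1.natDegree_eq_zero.1 hQ.2.1
      simp [this]
    · have h := natDegree_eq_one.1 hQ.2.1
      obtain ⟨a, ha, b, rfl⟩ := h
      have hm := hQ.1
      rw [Monic, leadingCoeff, hQ.2.1] at hm
      simp [coeff_C] at hm
      simp [hm]
    · obtain ⟨K, hK⟩ := hJ.exists_orth (lam := 0) le_rfl (k + 1)
      obtain ⟨R, hR⟩ := hJ.exists_orth hl k
      obtain ⟨t, ht, e⟩ := hJ.step h1 hl hK hR hQ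
      have a1 := hK.pos_right hJ x hx
      have a2 := (ih k (by omega) R hR x hx).1
      have : 0 < (derivative Q).eval x := by
        rw [e, eval_add, eval_smul, eval_smul, smul_eq_mul, smul_eq_mul]
        have : 0 < ((k : ℝ) + 2) * K.eval x := by positivity
        have := mul_nonneg ht a2
        linarith
      exact ⟨this.le, fun _ => this⟩

/-- For `-1/2 < α < 1/2` at most one symmetric pair of zeros of
`Q_{n,λ}^{(α)}` lies outside `[-1,1]`. -/
theorem gegSobolev_zeros_outside_pair (α lam : ℝ) (hα1 : -1/2 < α) (hα2 : α < 1/2)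
    (hlam : 0 ≤ lam) (n : ℕ) (hn : 1 ≤ n)
    (Q : Polynomial ℝ) (hQ : IsMonicGegSobolev α lam n Q) :
    {x : ℝ | Q.IsRoot x ∧ 1 < |x|}.ncard ≤ 2 ∧
      ∀ x : ℝ, Q.IsRoot x → 1 < |x| → Q.IsRoot (-x) := by
  obtain ⟨J, hJe⟩ := exists_J α hα1 hα2
  have hJ : GJ α J := by
    refine ⟨fun p hp h0 => ?_, fun T => ?_, fun p => ?_⟩
    · rw [hJe]; exact J_pos α hα1 hα2 p hp h0
    · rw [hJe]; exact J_parts α hα1 hα2 T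
    · rw [hJe, hJe]; exact J_neg α p
  have hg : ∀ f g : ℝ[X], gegInner α f g = J (f * g) := by
    intro f g
    rw [hJe]
    simp only [gegInner, eval_mul]
  have hO : IsOrth J lam n Q := by
    refine ⟨hQ.1, hQ.2.1, fun p hp => ?_⟩
    have := hQ.2.2 p hp
    rwa [sobInner, hg, hg] at this
  have hmono : StrictMonoOn (fun x => Q.eval x) (Ioi 1) := by
    refine strictMonoOn_of_deriv_pos (convex_Ioi 1) Q.continuous.continuousOn fun x hx => ?_
    rw [interior_Ioi] at hx
    rw [Polynomial.deriv]
    exact (hJ.deriv_nonneg hα1 hlam n Q hO x hx).2 hn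
  have hsym : ∀ x : ℝ, Q.IsRoot x → Q.IsRoot (-x) := by
    intro x hx
    have h := congrArg (eval x) (hO.parity hJ hlam)
    rw [IsRoot] at hx ⊢
    simpa [eval_comp, hx] using h
  refine ⟨?_, fun x hx _ => hsym x hx⟩
  have huniq : ∀ x y : ℝ, Q.IsRoot x → 1 < x → Q.IsRoot y → 1 < y → x = y :=
    fun x y hx h1 hy h2 => hmono.injOn h1 h2 (hx.trans hy.symm)
  by_cases hex : ∃ a, Q.IsRoot a ∧ 1 < a
  · obtain ⟨a, ha, ha1⟩ := hex
    have hsub : {x : ℝ | Q.IsRoot x ∧ 1 < |x|} ⊆ {a, -a} := by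
      rintro x ⟨hx, hx1⟩
      rcases lt_abs.1 hx1 with h | h
      · left; exact huniq x a hx h ha ha1
      · right
        have := huniq (-x) a (hsym x hx) h ha ha1
        rw [Set.mem_singleton_iff]; linarith
    exact (Set.ncard_le_ncard hsub (Set.toFinite _)).trans
      ((Set.ncard_insert_le _ _).trans (by simp))
  · have : {x : ℝ | Q.IsRoot x ∧ 1 < |x|} = ∅ := by
      ext x
      simp only [Set.mem_ofPred_eq, Set.mem_empty_iff_false, iff_false]
      rintro ⟨hx, hx1⟩
      rcases lt_abs.1 hx1 with h | h
      · exact hex ⟨x, hx, h⟩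
      · exact hex ⟨-x, hsym x hx, h⟩
    rw [this]; simp
end

section
/- For α ≥ 1/2, λ ≥ 0 and every n ≥ 0, the monic Gegenbauer–Sobolev polynomial satisfies Q_{n,λ}^{(α)}(1) > 0. -/
open Polynomial MeasureTheory Real Set

/-- The weighted integral as a linear functional. -/
theorem gs_exists_functional (β : ℝ) (hβ : 0 ≤ β) :
    ∃ I : Polynomial ℝ →ₗ[ℝ] ℝ,
      (∀ p, I p = ∫ x in Set.Ioo (-1 : ℝ) 1, p.eval x * (1 - x ^ 2) ^ β) ∧
      (∀ p, I ((1 - X ^ 2) * derivative p - C (2 * β + 2) * X * p) = 0) ∧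
      (∀ p, p ≠ 0 → 0 < I (p * p)) ∧
      (∀ p, I (p.comp (-X)) = I p) := by
  have hc : ∀ p : Polynomial ℝ, Continuous fun x : ℝ => p.eval x * (1 - x ^ 2) ^ β := by
    intro p
    apply p.continuous.mul
    exact (by fun_prop : Continuous fun x : ℝ => 1 - x ^ 2).rpow_const (fun _ => Or.inr hβ)
  have hi : ∀ p : Polynomial ℝ, IntervalIntegrable (fun x : ℝ => p.eval x * (1 - x ^ 2) ^ β)
      volume (-1) 1 := fun p => (hc p).intervalIntegrable _ _
  refine ⟨{ toFun := fun p => ∫ x in (-1 : ℝ)..1, p.eval x * (1 - x ^ 2) ^ β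
            map_add' := ?_, map_smul' := ?_ }, ?_, ?_, ?_, ?_⟩
  · intro p q
    rw [← intervalIntegral.integral_add (hi p) (hi q)]
    congr 1; ext x; simp; ring
  · intro c p
    simp only [RingHom.id_apply, smul_eq_mul]
    rw [← intervalIntegral.integral_const_mul]
    congr 1; ext x; simp; ring
  · intro p
    simp only [LinearMap.coe_mk, AddHom.coe_mk]
    rw [intervalIntegral.integral_of_le (by norm_num), integral_Ioc_eq_integral_Ioo]
  · intro p
    simp only [LinearMap.coe_mk, AddHom.coe_mk]
    have hd : ∀ x ∈ Set.uIcc (-1 : ℝ) 1, HasDerivAt (fun x : ℝ => p.eval x * (1 - x ^ 2) ^ (β + 1))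
        (((1 - X ^ 2) * derivative p - C (2 * β + 2) * X * p).eval x * (1 - x ^ 2) ^ β) x := by
      intro x hx
      rw [Set.uIcc_of_le (by norm_num)] at hx
      have h0 : 0 ≤ 1 - x ^ 2 := by nlinarith [hx.1, hx.2]
      have h1 : HasDerivAt (fun x : ℝ => 1 - x ^ 2) (-(2 * x)) x := by
        simpa using (hasDerivAt_pow 2 x).const_sub 1
      have h2 := (p.hasDerivAt x).mul (h1.rpow_const (p := β + 1) (Or.inr (by linarith)))
      refine h2.congr_deriv ?_
      have h3 : (1 - x ^ 2) ^ (β + 1) = (1 - x ^ 2) ^ β * (1 - x ^ 2) :=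
        Real.rpow_add_one' h0 (by linarith)
      rw [h3, show β + 1 - 1 = β by ring]
      simp
      ring
    rw [intervalIntegral.integral_eq_sub_of_hasDerivAt hd (hi _)]
    have : β + 1 ≠ 0 := by linarith
    simp [Real.zero_rpow this]
  · intro p hp
    simp only [LinearMap.coe_mk, AddHom.coe_mk]
    have hfin : (p.roots.toFinset : Set ℝ).Finite := Finset.finite_toSet _
    have hinf : (Set.Ioo (-1 : ℝ) 1).Infinite := Set.Ioo_infinite (by norm_num)
    obtain ⟨c, hc1, hc2⟩ := (hinf.diff hfin).nonempty
    have hpc : p.eval c ≠ 0 := by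
      intro h
      apply hc2
      simp [hp, h]
    have hnn : ∀ x ∈ Set.Icc (-1 : ℝ) 1, 0 ≤ 1 - x ^ 2 := fun x hx => by nlinarith [hx.1, hx.2]
    apply intervalIntegral.integral_pos (by norm_num) (hc _).continuousOn
    · intro x hx
      have := hnn x ⟨hx.1.le, hx.2⟩
      have := Real.rpow_nonneg this β
      simp only [eval_mul]
      exact mul_nonneg (mul_self_nonneg _) this
    · refine ⟨c, ⟨hc1.1.le, hc1.2.le⟩, ?_⟩
      have h1 : 0 < 1 - c ^ 2 := by nlinarith [hc1.1, hc1.2]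
      simp only [eval_mul]
      exact mul_pos (mul_self_pos.2 hpc) (Real.rpow_pos_of_pos h1 β)
  · intro p
    simp only [LinearMap.coe_mk, AddHom.coe_mk]
    have := intervalIntegral.integral_comp_neg (a := -1) (b := 1)
      (fun x : ℝ => p.eval x * (1 - x ^ 2) ^ β)
    simpa using this

/-- A functional killing degree `< k` is determined on degree `≤ k` by a monic polynomial. -/
theorem gs_lead (J : Polynomial ℝ →ₗ[ℝ] ℝ) (k : ℕ) (hJ : ∀ p : Polynomial ℝ, p.degree < k → J p = 0)
    (M : Polynomial ℝ) (hM : M.Monic) (hk : M.natDegree = k) (p : Polynomial ℝ)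
    (hp : p.degree < (k + 1 : ℕ)) : J p = p.coeff k * J M := by
  have h : (p - C (p.coeff k) * M).degree < k := by
    rw [degree_lt_iff_coeff_zero] at hp ⊢
    intro m hm
    rcases hm.eq_or_lt with rfl | hm
    · have : M.coeff k = 1 := by rw [← hk]; exact hM
      simp [this]
    · have : M.coeff m = 0 := coeff_eq_zero_of_natDegree_lt (by omega)
      simp [this, hp m hm]
  have h2 := hJ _ h
  rw [map_sub, C_mul', map_smul, smul_eq_mul] at h2
  linarith

/-- Abstract Sobolev functional. -/
noncomputable def gsB (I : Polynomial ℝ →ₗ[ℝ] ℝ) (l : ℝ) (f : Polynomial ℝ) : Polynomial ℝ →ₗ[ℝ] ℝ :=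
  I.comp (LinearMap.mulLeft ℝ f) +
    l • (I.comp ((LinearMap.mulLeft ℝ (derivative f)).comp derivative))

theorem gsB_apply (I : Polynomial ℝ →ₗ[ℝ] ℝ) (l : ℝ) (f g : Polynomial ℝ) :
    gsB I l f g = I (f * g) + l * I (derivative f * derivative g) := by
  simp [gsB]

theorem gsB_pos (I : Polynomial ℝ →ₗ[ℝ] ℝ) (hI : ∀ p, p ≠ 0 → 0 < I (p * p)) (l : ℝ) (hl : 0 ≤ l)
    (f : Polynomial ℝ) (hf : f ≠ 0) : 0 < gsB I l f f := by
  rw [gsB_apply]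
  have h1 := hI f hf
  have h2 : 0 ≤ I (derivative f * derivative f) := by
    by_cases h : derivative f = 0
    · simp [h]
    · exact (hI _ h).le
  positivity

theorem gs_unique (I : Polynomial ℝ →ₗ[ℝ] ℝ) (hI : ∀ p, p ≠ 0 → 0 < I (p * p)) (l : ℝ) (hl : 0 ≤ l)
    (n : ℕ) (f g : Polynomial ℝ) (hf : f.Monic) (hfn : f.natDegree = n) (hg : g.Monic)
    (hgn : g.natDegree = n) (hfo : ∀ p : Polynomial ℝ, p.degree < n → gsB I l f p = 0)
    (hgo : ∀ p : Polynomial ℝ, p.degree < n → gsB I l g p = 0) : f = g := by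
  by_contra hne
  have hne' : f - g ≠ 0 := sub_ne_zero.2 hne
  have hd : (f - g).degree < n := by
    have := degree_sub_lt (p := f) (q := g) (by
      rw [degree_eq_natDegree hf.ne_zero, degree_eq_natDegree hg.ne_zero, hfn, hgn]) hf.ne_zero
      (by rw [hf.leadingCoeff, hg.leadingCoeff])
    rwa [degree_eq_natDegree hf.ne_zero, hfn] at this
  have h1 := gsB_pos I hI l hl _ hne'
  have h2 : gsB I l (f - g) (f - g) = gsB I l f (f - g) - gsB I l g (f - g) := by
    simp only [gsB_apply, derivative_sub, sub_mul, map_sub]; ring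
  rw [h2, hfo _ hd, hgo _ hd] at h1
  simp at h1

theorem gsB_comp (I : Polynomial ℝ →ₗ[ℝ] ℝ) (hI : ∀ p, I (p.comp (-X)) = I p) (l : ℝ)
    (f g : Polynomial ℝ) : gsB I l (f.comp (-X)) g = gsB I l f (g.comp (-X)) := by
  rw [gsB_apply, gsB_apply, ← hI (f.comp (-X) * g), ← hI (derivative (f.comp (-X)) * derivative g)]
  simp [derivative_comp, mul_comp, comp_assoc]

theorem gs_parity_s9 (I : Polynomial ℝ →ₗ[ℝ] ℝ) (hI : ∀ p, p ≠ 0 → 0 < I (p * p))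
    (hI' : ∀ p, I (p.comp (-X)) = I p) (l : ℝ) (hl : 0 ≤ l)
    (n : ℕ) (f : Polynomial ℝ) (hf : f.Monic) (hfn : f.natDegree = n)
    (hfo : ∀ p : Polynomial ℝ, p.degree < n → gsB I l f p = 0) :
    f.comp (-X) = C ((-1) ^ n) * f := by
  have hnd : (f.comp (-X)).natDegree = n := by
    rw [natDegree_comp]; simp [hfn]
  have key : C ((-1) ^ n) * f.comp (-X) = f := by
    have hu : ((-1 : ℝ) ^ n) ≠ 0 := by positivity
    apply gs_unique I hI l hl n _ _ _ _ hf hfn _ hfo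
    · rw [Monic, leadingCoeff_mul, leadingCoeff_C, leadingCoeff_comp (by simp), hf.leadingCoeff]
      simp [hfn, ← mul_pow]
    · rw [natDegree_C_mul hu, hnd]
    · intro p hp
      have h1 : gsB I l (C ((-1) ^ n) * f.comp (-X)) p = (-1) ^ n * gsB I l (f.comp (-X)) p := by
        simp only [gsB_apply, C_mul', derivative_smul, smul_mul_assoc, map_smul, smul_eq_mul]
        ring
      rw [h1, gsB_comp I hI', hfo, mul_zero]
      by_cases h0 : p = 0
      · simp only [h0, zero_comp, degree_zero]; exact WithBot.bot_lt_coe _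
      · rw [← natDegree_lt_iff_degree_lt h0] at hp
        refine lt_of_le_of_lt degree_le_natDegree ?_
        rw [natDegree_comp]
        simpa using hp
  conv_rhs => rw [← key]
  rw [← mul_assoc, ← C_mul, ← mul_pow]
  simp

theorem gs_parity_zero (I : Polynomial ℝ →ₗ[ℝ] ℝ) 
    (hI' : ∀ p, I (p.comp (-X)) = I p) (l : ℝ) (n : ℕ) (f : Polynomial ℝ)
    (hf : f.comp (-X) = C ((-1) ^ n) * f) : gsB I l f (X ^ (n + 1)) = 0 := by
  have h := gsB_comp I hI' l f (X ^ (n + 1))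
  rw [hf] at h
  have e : (X ^ (n + 1) : Polynomial ℝ).comp (-X) = C ((-1) ^ (n + 1)) * X ^ (n + 1) := by
    simp [← mul_pow]
  have h1 : gsB I l (C ((-1) ^ n) * f) (X ^ (n + 1)) = (-1) ^ n * gsB I l f (X ^ (n + 1)) := by
    simp only [gsB_apply, C_mul', derivative_smul, smul_mul_assoc, map_smul, smul_eq_mul]
    ring
  rw [h1, e, C_mul', map_smul, smul_eq_mul, pow_succ (-1 : ℝ) n] at h
  have hu : ((-1 : ℝ) ^ n) ≠ 0 := by positivity
  have : (-1 : ℝ) ^ n * (2 * gsB I l f (X ^ (n + 1))) = 0 := by linarith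
  rcases mul_eq_zero.1 this with h | h
  · exact absurd h hu
  · linarith

/-- The Gegenbauer differential operator. -/
noncomputable def gsL (β : ℝ) (p : Polynomial ℝ) : Polynomial ℝ :=
  (1 - X ^ 2) * derivative (derivative p) - C (2 * β + 2) * X * derivative p

theorem gsL_add (β : ℝ) (p q : Polynomial ℝ) : gsL β (p + q) = gsL β p + gsL β q := by
  simp only [gsL, derivative_add]; ring

theorem gsL_C_mul (β c : ℝ) (p : Polynomial ℝ) : gsL β (C c * p) = C c * gsL β p := by
  simp only [gsL, derivative_C_mul]; ring

theorem gsL_pow (β : ℝ) (j : ℕ) : gsL β ((X - 1) ^ (j + 1)) =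
    - C ((j + 1 : ℝ) * (j + 1 + 2 * β + 1)) * (X - 1) ^ (j + 1)
      - C (2 * (j + 1 : ℝ) * (j + 1 + β)) * (X - 1) ^ j := by
  have h2 : (C (2 : ℝ) : Polynomial ℝ) = 2 := rfl
  rcases j with _ | j
  · simp [gsL, h2]; ring
  · have e : ((j + 1 : ℕ) : Polynomial ℝ) = (j : Polynomial ℝ) + 1 := by push_cast; ring
    simp [gsL, h2, derivative_pow]
    ring

theorem gsL_one (β : ℝ) : gsL β 1 = 0 := by simp [gsL]

theorem gs_geg_aux (β : ℝ) (hβ : 0 ≤ β) (k : ℕ) (t : ℕ) : ∀ j : ℕ, j + 1 + t = k →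
    ∃ (A : Polynomial ℝ) (r : ℝ), 0 < r ∧ A.Monic ∧ A.natDegree = k ∧ A.eval 1 = 0 ∧
      gsL β A + C ((k : ℝ) * (k + 2 * β + 1)) * A = - C r * (X - 1) ^ j := by
  induction t with
  | zero =>
    rintro j rfl
    refine ⟨(X - 1) ^ (j + 1), 2 * (j + 1 : ℝ) * (j + 1 + β), by positivity, ?_, ?_, by simp, ?_⟩
    · exact (monic_X_sub_C (1 : ℝ)).pow _
    · have := natDegree_pow (X - C (1 : ℝ)) (j + 1)
      rw [natDegree_X_sub_C] at this
      simpa using this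
    · rw [gsL_pow]; push_cast; ring
  | succ t ih =>
    intro j hj
    obtain ⟨A, r, hr, hA, hAk, hA1, hL⟩ := ih (j + 1) (by omega)
    have hjk : (j : ℝ) + 1 < k := by
      have : j + 1 < k := by omega
      exact_mod_cast this
    set δ : ℝ := (k : ℝ) * (k + 2 * β + 1) - (j + 1) * (j + 1 + 2 * β + 1) with hδ
    have hj0 : (0 : ℝ) ≤ j := Nat.cast_nonneg j
    have hδ0 : 0 < δ := by
      have : δ = (k - (j + 1)) * (k + (j + 1) + 2 * β + 1) := by rw [hδ]; ring
      rw [this]; apply mul_pos <;> linarith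
    have hc : 0 < r / δ := by positivity
    have hnd : ((X - 1 : Polynomial ℝ) ^ (j + 1)).natDegree = j + 1 := by
      have := natDegree_pow (X - C (1 : ℝ)) (j + 1)
      rw [natDegree_X_sub_C] at this
      simpa using this
    have hnd2 : (C (r / δ) * (X - 1 : Polynomial ℝ) ^ (j + 1)).natDegree < A.natDegree := by
      rw [natDegree_C_mul hc.ne', hnd, hAk]; omega
    refine ⟨A + C (r / δ) * (X - 1) ^ (j + 1), (r / δ) * (2 * (j + 1 : ℝ) * (j + 1 + β)),
      by positivity, ?_, ?_, by simp [hA1], ?_⟩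
    · exact hA.add_of_left (degree_lt_degree hnd2)
    · rw [natDegree_add_eq_left_of_natDegree_lt hnd2, hAk]
    · rw [gsL_add, gsL_C_mul, gsL_pow]
      have e : C r = C (r / δ) * (C ((k : ℝ) * (k + 2 * β + 1)) -
          C ((j + 1 : ℝ) * (j + 1 + 2 * β + 1))) := by
        rw [← C_sub, ← hδ, ← C_mul, div_mul_cancel₀ _ hδ0.ne']
      rw [e] at hL
      rw [C_mul (a := r / δ) (b := 2 * (j + 1 : ℝ) * (j + 1 + β))]
      linear_combination hL

theorem gs_geg_exists (β : ℝ) (hβ : 0 ≤ β) (k : ℕ) (hk : 1 ≤ k) :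
    ∃ P : Polynomial ℝ, P.Monic ∧ P.natDegree = k ∧ 0 < P.eval 1 ∧
      gsL β P = - C ((k : ℝ) * (k + 2 * β + 1)) * P := by
  obtain ⟨A, r, hr, hA, hAk, hA1, hL⟩ := gs_geg_aux β hβ k (k - 1) 0 (by omega)
  have hk' : (1 : ℝ) ≤ k := by exact_mod_cast hk
  have hμ : 0 < (k : ℝ) * (k + 2 * β + 1) := by positivity
  set μ := (k : ℝ) * (k + 2 * β + 1)
  have hnd : (C (r / μ)).natDegree < A.natDegree := by rw [natDegree_C, hAk]; omega
  refine ⟨A + C (r / μ), hA.add_of_left (degree_lt_degree hnd), ?_, ?_, ?_⟩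
  · rw [natDegree_add_eq_left_of_natDegree_lt hnd, hAk]
  · simp [hA1]; positivity
  · have h1 := gsL_C_mul β (r / μ) 1
    rw [gsL_one, mul_one, mul_zero] at h1
    rw [gsL_add, h1]
    have e : C r = C (r / μ) * C μ := by rw [← C_mul, div_mul_cancel₀ _ hμ.ne']
    rw [e] at hL
    linear_combination hL

theorem gsL_symm (β : ℝ) (I : Polynomial ℝ →ₗ[ℝ] ℝ)
    (h : ∀ p, I ((1 - X ^ 2) * derivative p - C (2 * β + 2) * X * p) = 0) (p q : Polynomial ℝ) :
    I (gsL β p * q) = I (p * gsL β q) := by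
  have h1 := h (derivative p * q)
  have h2 := h (p * derivative q)
  rw [← sub_eq_zero, ← map_sub]
  have h3 : I (((1 - X ^ 2) * derivative (derivative p * q) - C (2 * β + 2) * X * (derivative p * q)) -
      ((1 - X ^ 2) * derivative (p * derivative q) - C (2 * β + 2) * X * (p * derivative q))) = 0 := by
    rw [map_sub, h1, h2, sub_zero]
  rw [← h3]
  congr 1
  simp only [gsL, derivative_mul]
  ring

theorem gs_geg_orth (β : ℝ) (hβ : 0 ≤ β) (I : Polynomial ℝ →ₗ[ℝ] ℝ)
    (h : ∀ p, I ((1 - X ^ 2) * derivative p - C (2 * β + 2) * X * p) = 0) (k : ℕ)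
    (P : Polynomial ℝ) (hP : gsL β P = - C ((k : ℝ) * (k + 2 * β + 1)) * P) :
    ∀ m ≤ k, ∀ p : Polynomial ℝ, p.degree < m → I (P * p) = 0 := by
  have hs : ∀ q, -((k : ℝ) * (k + 2 * β + 1)) * I (P * q) = I (P * gsL β q) := by
    intro q
    rw [← gsL_symm β I h, hP, ← C_neg, mul_assoc, C_mul', map_smul, smul_eq_mul]
  have hpow : ∀ j : ℕ, j < k → I (P * (X - 1) ^ j) = 0 := by
    intro j
    induction j with
    | zero =>
      intro hk
      have h1 := hs 1
      have hk' : (0 : ℝ) < k := by exact_mod_cast hk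
      have hμ : 0 < (k : ℝ) * (k + 2 * β + 1) := by positivity
      rw [gsL_one, mul_zero, map_zero] at h1
      rcases mul_eq_zero.1 h1 with h1 | h1
      · linarith
      · simpa using h1
    | succ j ih =>
      intro hk
      have ih := ih (by omega)
      have h1 := hs ((X - 1) ^ (j + 1))
      have hk' : (j + 1 : ℝ) < k := by exact_mod_cast hk
      rw [gsL_pow] at h1
      have e : P * (- C ((j + 1 : ℝ) * (j + 1 + 2 * β + 1)) * (X - 1) ^ (j + 1)
          - C (2 * (j + 1 : ℝ) * (j + 1 + β)) * (X - 1) ^ j) =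
          (-((j + 1 : ℝ) * (j + 1 + 2 * β + 1))) • (P * (X - 1) ^ (j + 1)) -
          (2 * (j + 1 : ℝ) * (j + 1 + β)) • (P * (X - 1) ^ j) := by
        simp only [← C_mul', C_neg]; ring
      rw [e, map_sub, map_smul, map_smul, ih, smul_eq_mul, smul_eq_mul] at h1
      have hj0 : (0 : ℝ) ≤ j := Nat.cast_nonneg j
      have h2 : ((k - (j + 1)) * (k + (j + 1) + 2 * β + 1)) * I (P * (X - 1) ^ (j + 1)) = 0 := by
        linarith
      rcases mul_eq_zero.1 h2 with h2 | h2
      · have : 0 < ((k : ℝ) - (j + 1)) * (k + (j + 1) + 2 * β + 1) := by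
          apply mul_pos <;> linarith
        linarith
      · exact h2
  intro m
  induction m with
  | zero =>
    intro _ p hp
    have : p = 0 := by simpa using hp
    simp [this]
  | succ m ih =>
    intro hm p hp
    have := gs_lead (I.comp (LinearMap.mulLeft ℝ P)) m (fun p hp => by
      simpa using ih (by omega) p hp) ((X - 1) ^ m) ((monic_X_sub_C (1 : ℝ)).pow _) (by
        have := natDegree_pow (X - C (1 : ℝ)) m
        rw [natDegree_X_sub_C] at this
        simpa using this) p hp
    simpa [hpow m (by omega)] using this

theorem gs_deg (p : Polynomial ℝ) (m : ℕ) (hp : p.degree < m) :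
    (derivative ((1 - X ^ 2) * p)).degree < (m + 1 : ℕ) ∧ (derivative p).degree < m ∧
    (derivative ((1 - X ^ 2) * p)).coeff m = - (m + 1 : ℝ) * p.coeff (m - 1) + 0 * m
      ∨ m = 0 := by
  rcases m with _ | m
  · right; rfl
  left
  rw [degree_lt_iff_coeff_zero] at hp
  have e : ∀ i, ((1 - X ^ 2) * p).coeff (i + 2) = p.coeff (i + 2) - p.coeff i := by
    intro i
    rw [sub_mul, one_mul, coeff_sub, mul_comm, coeff_mul_X_pow]
  refine ⟨?_, ?_, ?_⟩
  · rw [degree_lt_iff_coeff_zero]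
    intro i hi
    obtain ⟨i, rfl⟩ : ∃ i', i = i' + 1 := ⟨i - 1, by omega⟩
    rw [coeff_derivative, e, hp _ (by omega), hp _ (by omega)]; simp
  · rw [degree_lt_iff_coeff_zero]
    intro i hi
    rw [coeff_derivative, hp _ (by omega)]; simp
  · rw [coeff_derivative, e, hp _ (by omega)]
    push_cast
    simp
    ring

theorem gs_main_s9 (β : ℝ) (hβ : 0 ≤ β) (l : ℝ) (hl : 0 ≤ l) (I : Polynomial ℝ →ₗ[ℝ] ℝ)
    (h : ∀ p, I ((1 - X ^ 2) * derivative p - C (2 * β + 2) * X * p) = 0)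
    (hpos : ∀ p, p ≠ 0 → 0 < I (p * p)) (hev : ∀ p, I (p.comp (-X)) = I p) (m : ℕ)
    (S : Polynomial ℝ) (hS : S.Monic) (hSm : S.natDegree = m)
    (hSo : ∀ p : Polynomial ℝ, p.degree < m → gsB I l S p = 0) (hS1 : 0 < S.eval 1) :
    ∃ T : Polynomial ℝ, T.Monic ∧ T.natDegree = m + 2 ∧
      (∀ p : Polynomial ℝ, p.degree < (m + 2 : ℕ) → gsB I l T p = 0) ∧ 0 < T.eval 1 := by
  obtain ⟨P, hP, hPk, hP1, hPL⟩ := gs_geg_exists β hβ (m + 1) (by omega)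
  have hPo : ∀ p : Polynomial ℝ, p.degree < (m + 1 : ℕ) → I (P * p) = 0 :=
    gs_geg_orth β hβ I h (m + 1) P hPL (m + 1) le_rfl
  have hPP := hpos P hP.ne_zero
  have hPpar : P.comp (-X) = C ((-1) ^ (m + 1)) * P :=
    gs_parity_s9 I hpos hev 0 le_rfl (m + 1) P hP hPk (fun p hp => by
      rw [gsB_apply, hPo p hp]; simp)
  have hSpar := gs_parity_s9 I hpos hev l hl m S hS hSm hSo
  set κ : ℝ := m + 1 + 2 * β with hκ
  have hm0 : (0 : ℝ) ≤ m := Nat.cast_nonneg m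
  have hκ0 : 0 < κ := by positivity
  obtain ⟨R, hR⟩ : ∃ R : Polynomial ℝ,
      R = C κ⁻¹ * (C (2 * β) * X * P - (1 - X ^ 2) * derivative P) := ⟨_, rfl⟩
  -- derivative of R
  have hCk : (C κ⁻¹ * C κ : Polynomial ℝ) = 1 := by rw [← C_mul, inv_mul_cancel₀ hκ0.ne', C_1]
  have hRd : derivative R = C (m + 2 : ℝ) * P := by
    have e : derivative (C (2 * β) * X * P - (1 - X ^ 2) * derivative P) =
        C κ * (C (m + 2 : ℝ) * P) := by
      have h2 : (C (2 : ℝ) : Polynomial ℝ) = 2 := rfl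
      rw [gsL] at hPL
      simp only [hκ, derivative_sub, derivative_mul, derivative_C, derivative_X, derivative_X_pow,
        derivative_one, C_add, C_mul, C_1, h2] at hPL ⊢
      push_cast at hPL ⊢
      simp only [C_add, C_1, h2, C_mul] at hPL ⊢
      have h3 : derivative (2 : Polynomial ℝ) = 0 := derivative_ofNat 2
      linear_combination -hPL + C β * X * P * h3
    rw [hR, derivative_C_mul, e, ← mul_assoc, hCk, one_mul]
  -- pairing with R
  have hRI : ∀ p, I (R * p) = κ⁻¹ * I (P * derivative ((1 - X ^ 2) * p)) := by
    intro p
    have h1 := h (P * p)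
    have e : R * p = κ⁻¹ • (P * derivative ((1 - X ^ 2) * p) -
        ((1 - X ^ 2) * derivative (P * p) - C (2 * β + 2) * X * (P * p))) := by
      have h2 : (C (2 : ℝ) : Polynomial ℝ) = 2 := rfl
      rw [hR, ← C_mul']
      simp only [derivative_sub, derivative_mul, derivative_X_pow, derivative_one, C_add, C_mul, h2]
      push_cast
      simp only [C_1, h2]
      ring
    rw [e, map_smul, map_sub, h1, smul_eq_mul, sub_zero]
  have hRB : ∀ p : Polynomial ℝ, p.degree < (m + 2 : ℕ) → gsB I l R p = I (R * p) := by
    intro p hp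
    have h1 : (derivative p).degree < (m + 1 : ℕ) := by
      rw [degree_lt_iff_coeff_zero] at hp ⊢
      intro i hi
      rw [coeff_derivative, hp _ (by omega)]; simp
    rw [gsB_apply, hRd, mul_assoc, C_mul', map_smul, hPo _ h1]
    simp
  -- R monic of degree m+2
  have hRc : ∀ i, R.coeff (i + 1) * (i + 1 : ℝ) = (m + 2) * P.coeff i := by
    intro i
    have := congrArg (fun q => coeff q i) hRd
    simpa only [coeff_derivative, coeff_C_mul] using this
  have hPc : P.coeff (m + 1) = 1 := by rw [← hPk]; exact hP
  have hRtop : R.coeff (m + 2) = 1 := by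
    have := hRc (m + 1)
    rw [hPc] at this
    push_cast at this
    have h3 : (m : ℝ) + 1 + 1 ≠ 0 := by positivity
    apply mul_right_cancel₀ h3
    linarith
  have hRhi : ∀ i, m + 2 < i → R.coeff i = 0 := by
    intro i hi
    obtain ⟨i, rfl⟩ : ∃ i', i = i' + 1 := ⟨i - 1, by omega⟩
    have := hRc i
    rw [coeff_eq_zero_of_natDegree_lt (p := P) (by omega), mul_zero] at this
    rcases mul_eq_zero.1 this with h | h
    · exact h
    · have : (i : ℝ) + 1 ≠ 0 := by positivity
      exact absurd h this
  have hRn : R.natDegree = m + 2 := by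
    apply natDegree_eq_of_le_of_coeff_ne_zero
    · exact natDegree_le_iff_coeff_eq_zero.2 hRhi
    · rw [hRtop]; exact one_ne_zero
  have hRm : R.Monic := by rw [Monic, leadingCoeff, hRn, hRtop]
  -- parity of R
  have hRpar : R.comp (-X) = C ((-1) ^ m) * R := by
    have hd := congrArg derivative hPpar
    rw [derivative_comp, derivative_C_mul] at hd
    have hd' : (derivative P).comp (-X) = C ((-1) ^ m) * derivative P := by
      simp [pow_succ] at hd
      simpa using hd
    rw [hR]
    simp only [mul_comp, sub_comp, C_comp, X_comp, hPpar, hd', pow_comp, one_comp]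
    rw [pow_succ (-1 : ℝ) m, mul_neg_one, C_neg]
    ring
  -- orthogonality of R
  have hRlow : ∀ p : Polynomial ℝ, p.degree < m → gsB I l R p = 0 := by
    intro p hp
    rw [hRB p (hp.trans (by exact_mod_cast (by omega : m < m + 2))), hRI]
    rw [hPo, mul_zero]
    rcases gs_deg p m hp with h | h
    · exact h.1
    · subst h
      have : p = 0 := by simpa using hp
      simp only [this, mul_zero, derivative_zero, degree_zero]; exact WithBot.bot_lt_coe _
  have hSd : S.degree < (m + 1 : ℕ) := by
    rw [degree_eq_natDegree hS.ne_zero, hSm]; exact_mod_cast Nat.lt_succ_self m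
  have hSd2 : S.degree < (m + 2 : ℕ) := hSd.trans (by exact_mod_cast Nat.lt_succ_self _)
  have hSc : S.coeff m = 1 := by rw [← hSm]; exact hS
  have hRS : gsB I l R S = -(κ⁻¹ * (m + 2) * I (P * P)) := by
    rw [hRB S hSd2, hRI]
    rcases gs_deg S (m + 1) hSd with h | h
    · have := gs_lead (I.comp (LinearMap.mulLeft ℝ P)) (m + 1) (fun p hp => by
        simpa using hPo p hp) P hP hPk _ h.1
      simp only [LinearMap.comp_apply, LinearMap.mulLeft_apply] at this
      rw [this, h.2.2]
      simp [hSc]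
      ring
    · omega
  have hSS := gsB_pos I hpos l hl S hS.ne_zero
  set b : ℝ := κ⁻¹ * (m + 2) * I (P * P) / gsB I l S S with hb
  have hb0 : 0 < b := by positivity
  have hTB : ∀ p, gsB I l (R + C b * S) p = gsB I l R p + b * gsB I l S p := by
    intro p
    simp only [gsB_apply, C_mul', derivative_smul, derivative_add, add_mul, map_add,
      smul_mul_assoc, map_smul, smul_eq_mul]
    ring
  have hnd : (C b * S).natDegree < R.natDegree := by
    rw [natDegree_C_mul hb0.ne', hSm, hRn]; omega
  refine ⟨R + C b * S, hRm.add_of_left (degree_lt_degree hnd), ?_, ?_, ?_⟩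
  · rw [natDegree_add_eq_left_of_natDegree_lt hnd, hRn]
  · have h0 : ∀ p : Polynomial ℝ, p.degree < m → gsB I l (R + C b * S) p = 0 := by
      intro p hp
      rw [hTB, hRlow p hp, hSo p hp]; simp
    have h1 : ∀ p : Polynomial ℝ, p.degree < (m + 1 : ℕ) → gsB I l (R + C b * S) p = 0 := by
      intro p hp
      rw [gs_lead _ m h0 S hS hSm p hp, hTB, hRS, hb, div_mul_cancel₀ _ hSS.ne']
      simp
    intro p hp
    rw [gs_lead _ (m + 1) h1 (X ^ (m + 1)) (monic_X_pow _) (natDegree_X_pow _) p hp, hTB,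
      gs_parity_zero I hev l m R hRpar, gs_parity_zero I hev l m S hSpar]
    simp
  · have hR1 : R.eval 1 = κ⁻¹ * (2 * β * P.eval 1) := by simp [hR]
    rw [eval_add, eval_mul, eval_C, hR1]
    have := mul_pos hb0 hS1
    have : 0 ≤ κ⁻¹ * (2 * β * P.eval 1) := by positivity
    linarith

/-- For `α ≥ 1/2` the monic Gegenbauer–Sobolev polynomial is positive at `1`. -/
theorem gegSobolev_pos_at_one (α lam : ℝ) (hα : 1/2 ≤ α) (hlam : 0 ≤ lam) (n : ℕ)
    (Q : Polynomial ℝ) (hQ : IsMonicGegSobolev α lam n Q) :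
    0 < Q.eval 1 := by
  obtain ⟨I, hI, hparts, hpos, hev⟩ := gs_exists_functional (α - 1/2) (by linarith)
  have hB : ∀ f g, sobInner α lam f g = gsB I lam f g := by
    intro f g
    rw [gsB_apply, hI, hI]
    simp only [sobInner, gegInner, eval_mul]
  obtain ⟨hQm, hQn, hQo⟩ := hQ
  have key : ∀ n : ℕ, ∃ S : Polynomial ℝ, S.Monic ∧ S.natDegree = n ∧
      (∀ p : Polynomial ℝ, p.degree < n → gsB I lam S p = 0) ∧ 0 < S.eval 1 := by
    intro n
    induction n using Nat.twoStepInduction with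
    | zero =>
      refine ⟨1, monic_one, natDegree_one, ?_, by simp⟩
      intro p hp
      have : p = 0 := by simpa using hp
      simp [this]
    | one =>
      refine ⟨X, monic_X, natDegree_X, ?_, by simp⟩
      intro p hp
      have h0 := gs_lead (gsB I lam X) 0 (fun p hp => by
        have : p = 0 := by simpa using hp
        simp [this]) 1 monic_one natDegree_one p hp
      have h1 : I X = 0 := by
        have := hev X
        rw [X_comp, map_neg] at this
        linarith
      rw [h0, gsB_apply]
      simp [h1]
    | more m ih _ =>
      obtain ⟨S, hS, hSm, hSo, hS1⟩ := ih
      exact gs_main_s9 (α - 1/2) (by linarith) lam hlam I hparts hpos hev m S hS hSm hSo hS1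
  obtain ⟨S, hS, hSm, hSo, hS1⟩ := key n
  have : Q = S := gs_unique I hpos lam hlam n Q S hQm hQn hS hSm
    (fun p hp => by rw [← hB]; exact hQo p hp) hSo
  rw [this]
  exact hS1
end

section
/- For α > 1/2 and λ > 0, the coefficients d_n(α) = ξ_n^{(α)} · ‖C_n^{(α)}‖_μ² / ‖Q_{n,λ}^{(α)}‖_S² satisfy the asymptotic relation d_n(α) ≅ 1/(16 λ n²); that is, 16 λ n² · d_n(α) → 1 as n → ∞. -/
open Polynomial MeasureTheory Real Set

namespace GS

lemma wcont {α : ℝ} (hα : 1/2 < α) : Continuous (fun x : ℝ => (1 - x ^ 2) ^ (α - 1/2)) := by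
  apply Continuous.rpow_const (by fun_prop)
  intro x; right; linarith

lemma G_eq (α : ℝ) (f g : ℝ[X]) : gegInner α f g =
    ∫ x in (-1:ℝ)..1, f.eval x * g.eval x * (1 - x ^ 2) ^ (α - 1/2) := by
  rw [intervalIntegral.integral_of_le (by norm_num), integral_Ioc_eq_integral_Ioo]; rfl

lemma G_comm (α : ℝ) (f g : ℝ[X]) : gegInner α f g = gegInner α g f := by
  simp only [G_eq]; congr 1; ext x; ring

lemma G_assoc (α : ℝ) (f q g : ℝ[X]) : gegInner α (q * f) g = gegInner α f (q * g) := by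
  simp only [G_eq, eval_mul]; congr 1; ext x; ring

lemma G_add {α : ℝ} (hα : 1/2 < α) (f g h : ℝ[X]) :
    gegInner α (f + g) h = gegInner α f h + gegInner α g h := by
  have := wcont hα
  have e : ∀ p : ℝ[X], Continuous fun x => p.eval x := fun p => p.continuous
  simp only [G_eq]
  rw [← intervalIntegral.integral_add]
  · congr 1; ext x; simp only [eval_add]; ring
  · exact (((e f).mul (e h)).mul this).intervalIntegrable _ _
  · exact (((e g).mul (e h)).mul this).intervalIntegrable _ _

lemma G_smul (α c : ℝ) (f h : ℝ[X]) :
    gegInner α (C c * f) h = c * gegInner α f h := by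
  simp only [G_eq]
  rw [← intervalIntegral.integral_const_mul]
  congr 1; ext x; simp only [eval_mul, eval_C]; ring

lemma G_sub {α : ℝ} (hα : 1/2 < α) (f g h : ℝ[X]) :
    gegInner α (f - g) h = gegInner α f h - gegInner α g h := by
  have : f - g = f + C (-1) * g := by simp [sub_eq_add_neg]
  rw [this, G_add hα, G_smul]; ring

lemma G_add_r {α : ℝ} (hα : 1/2 < α) (f g h : ℝ[X]) :
    gegInner α h (f + g) = gegInner α h f + gegInner α h g := by
  rw [G_comm, G_add hα, G_comm α f, G_comm α g]

lemma G_sub_r {α : ℝ} (hα : 1/2 < α) (f g h : ℝ[X]) :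
    gegInner α h (f - g) = gegInner α h f - gegInner α h g := by
  rw [G_comm, G_sub hα, G_comm α f, G_comm α g]

lemma G_smul_r (α c : ℝ) (f h : ℝ[X]) :
    gegInner α h (C c * f) = c * gegInner α h f := by
  rw [G_comm, G_smul, G_comm]

lemma G_pos {α : ℝ} (hα : 1/2 < α) (k : ℕ) (f : ℝ[X]) (hf : f ≠ 0) :
    0 < gegInner α f ((1 - X^2)^k * f) := by
  rw [G_eq]
  have e : ∀ p : ℝ[X], Continuous fun x => p.eval x := fun p => p.continuous
  have hw := wcont hα
  apply intervalIntegral.integral_pos (by norm_num)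
  · exact (((e f).mul (e _)).mul hw).continuousOn
  · intro x hx
    have h1 : 0 ≤ 1 - x^2 := by nlinarith [hx.1, hx.2]
    have h2 : 0 ≤ (1 - x^2) ^ (α - 1/2) := Real.rpow_nonneg h1 _
    have : f.eval x * ((1 - X^2)^k * f : ℝ[X]).eval x = (1 - x^2)^k * (f.eval x)^2 := by
      simp; ring
    rw [this]; positivity
  · obtain ⟨c, hc, hr⟩ : ∃ c ∈ Ioo (-1:ℝ) 1, c ∉ (f.roots.toFinset : Set ℝ) := by
      have hi : (Ioo (-1:ℝ) 1).Infinite := Ioo_infinite (by norm_num)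
      obtain ⟨c, hc⟩ := (hi.sdiff (f.roots.toFinset.finite_toSet)).nonempty
      exact ⟨c, hc.1, hc.2⟩
    have hr' : f.eval c ≠ 0 := by
      intro h; apply hr; simp [hf, h]
    refine ⟨c, ⟨hc.1.le, hc.2.le⟩, ?_⟩
    have h1 : 0 < 1 - c^2 := by nlinarith [hc.1, hc.2]
    have h2 : 0 < (1 - c^2) ^ (α - 1/2) := Real.rpow_pos_of_pos h1 _
    have : f.eval c * ((1 - X^2)^k * f : ℝ[X]).eval c = (1 - c^2)^k * (f.eval c)^2 := by
      simp; ring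
    rw [this]; positivity

lemma G_pos0 {α : ℝ} (hα : 1/2 < α) (f : ℝ[X]) (hf : f ≠ 0) : 0 < gegInner α f f := by
  simpa using G_pos hα 0 f hf

lemma G_nonneg {α : ℝ} (hα : 1/2 < α) (f : ℝ[X]) : 0 ≤ gegInner α f f := by
  by_cases hf : f = 0
  · subst hf; simp [G_eq]
  · exact (G_pos0 hα f hf).le

/-- the adjoint of the derivative -/
noncomputable def L (α : ℝ) (p : ℝ[X]) : ℝ[X] :=
  (1 - X^2) * derivative p - C (2*α+1) * (X * p)

lemma L_int {α : ℝ} (hα : 1/2 < α) (p : ℝ[X]) : gegInner α (L α p) 1 = 0 := by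
  rw [G_eq]
  have e : ∀ p : ℝ[X], Continuous fun x => p.eval x := fun p => p.continuous
  have key := intervalIntegral.integral_eq_sub_of_hasDerivAt (a := (-1:ℝ)) (b := 1)
    (f := fun x => p.eval x * (1 - x^2) ^ (α + 1/2))
    (f' := fun x => (L α p).eval x * (1:ℝ[X]).eval x * (1 - x^2) ^ (α - 1/2)) ?_ ?_
  · rw [key]
    have : α + 1/2 ≠ 0 := by linarith
    norm_num [Real.zero_rpow this]
  · intro x hx
    rw [uIcc_of_le (by norm_num)] at hx
    have h1 : 0 ≤ 1 - x^2 := by nlinarith [hx.1, hx.2]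
    have hd : HasDerivAt (fun x : ℝ => 1 - x^2) (-(2*x)) x := by
      simpa using (hasDerivAt_pow 2 x).const_sub 1
    have h2 := (p.hasDerivAt x).mul (hd.rpow_const (p := α + 1/2) (Or.inr (by linarith)))
    refine h2.congr_deriv ?_
    have h3 : α + 1/2 - 1 = α - 1/2 := by ring
    have h4 : (1 - x^2) ^ (α + 1/2) = (1 - x^2) * (1 - x^2) ^ (α - 1/2) := by
      have : α + 1/2 = 1 + (α - 1/2) := by ring
      rw [this, Real.rpow_add' h1 (by linarith), Real.rpow_one]
    rw [h3, h4]
    simp [L]; ring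
  · exact (((e _).mul (e _)).mul (wcont hα)).intervalIntegrable _ _

lemma byparts {α : ℝ} (hα : 1/2 < α) (p q : ℝ[X]) :
    gegInner α (derivative q) ((1 - X^2) * p) = - gegInner α q (L α p) := by
  have h := L_int hα (q * p)
  have e : L α (q * p) = ((1 - X^2) * p) * derivative q + q * L α p := by
    simp only [L, derivative_mul]; ring
  rw [e, G_add hα] at h
  have h1 : gegInner α (((1 - X^2) * p) * derivative q) 1 = gegInner α (derivative q) ((1 - X^2) * p) := by
    rw [G_assoc, mul_one]
  have h2 : gegInner α (q * L α p) 1 = gegInner α q (L α p) := by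
    rw [mul_comm, G_assoc, mul_one]
  linarith

lemma coeff_L (α : ℝ) (f : ℝ[X]) (k : ℕ) : (L α (derivative f)).coeff k =
    (k+2)*(k+1) * f.coeff (k+2) - k*(k+2*α) * f.coeff k := by
  have : L α (derivative f) = derivative (derivative f) - X * (X * derivative (derivative f))
     - C (2*α+1) * (X * derivative f) := by simp only [L]; ring
  rw [this, coeff_sub, coeff_sub, coeff_C_mul]
  rcases k with _ | _ | k <;> simp [coeff_derivative] <;> ring


lemma h_pos {α : ℝ} (hα : 1/2 < α) {P : ℕ → ℝ[X]} (hP : ∀ n, IsMonicGegenbauer α n (P n))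
    (n : ℕ) : 0 < gegInner α (P n) (P n) := G_pos0 hα _ (hP n).1.ne_zero

lemma coeff_top {α : ℝ} (_hα : 1/2 < α) {P : ℕ → ℝ[X]} (hP : ∀ n, IsMonicGegenbauer α n (P n))
    (n : ℕ) : (P n).coeff n = 1 := by
  have := (hP n).1.coeff_natDegree
  rwa [(hP n).2.1] at this

lemma coeff_gt {α : ℝ} (_hα : 1/2 < α) {P : ℕ → ℝ[X]} (hP : ∀ n, IsMonicGegenbauer α n (P n))
    (n k : ℕ) (h : n < k) : (P n).coeff k = 0 :=
  coeff_eq_zero_of_natDegree_lt (by rw [(hP n).2.1]; exact h)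

lemma ode {α : ℝ} (hα : 1/2 < α) {P : ℕ → ℝ[X]} (hP : ∀ n, IsMonicGegenbauer α n (P n))
    (n : ℕ) : L α (derivative (P n)) + C (n*(n+2*α)) * P n = 0 := by
  by_contra hne
  set R := L α (derivative (P n)) + C (n*(n+2*α)) * P n with hR
  have hd : R.degree < n := by
    rw [degree_lt_iff_coeff_zero]
    intro m hm
    rw [hR, coeff_add, coeff_L, coeff_C_mul, coeff_gt hα hP n (m+2) (by omega)]
    rcases hm.eq_or_lt with rfl | hm
    · ring
    · rw [coeff_gt hα hP n m hm]; ring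
  have hLd : (L α (derivative R)).degree < n := by
    rw [degree_lt_iff_coeff_zero] at hd ⊢
    intro m hm
    rw [coeff_L, hd m hm, hd (m+2) (by omega)]; ring
  have h1 : gegInner α (L α (derivative (P n))) R = 0 := by
    rw [G_comm]
    have a := byparts hα (derivative (P n)) R
    have b := byparts hα (derivative R) (P n)
    rw [(hP n).2.2 _ hLd, ← G_assoc, G_comm] at b
    rw [b] at a
    linarith
  have h2 := G_pos0 hα R hne
  nth_rewrite 1 [hR] at h2
  rw [G_add hα, G_smul, h1, (hP n).2.2 _ hd] at h2
  simp at h2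


lemma coeff_sub1 {α : ℝ} (hα : 1/2 < α) {P : ℕ → ℝ[X]} (hP : ∀ n, IsMonicGegenbauer α n (P n))
    (m : ℕ) : (P (m+1)).coeff m = 0 := by
  have h := congrArg (fun f => coeff f m) (ode hα hP (m+1))
  simp only [coeff_add, coeff_L, coeff_C_mul, coeff_zero] at h
  rw [coeff_gt hα hP _ (m+2) (by omega)] at h
  push_cast at h
  have h' : (2*m+1+2*α) * (P (m+1)).coeff m = 0 := by linarith
  have : (2*m+1+2*α : ℝ) ≠ 0 := by positivity
  exact (mul_eq_zero.1 h').resolve_left this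

lemma coeff_sub2 {α : ℝ} (hα : 1/2 < α) {P : ℕ → ℝ[X]} (hP : ∀ n, IsMonicGegenbauer α n (P n))
    (m : ℕ) : (P (m+2)).coeff m = -((m+2)*(m+1)/(4*(m+1+α))) := by
  have h := congrArg (fun f => coeff f m) (ode hα hP (m+2))
  simp only [coeff_add, coeff_L, coeff_C_mul, coeff_zero] at h
  rw [coeff_top hα hP] at h
  push_cast at h
  have : (m+1+α : ℝ) ≠ 0 := by positivity
  field_simp
  linarith

lemma gam {α : ℝ} (hα : 1/2 < α) {P : ℕ → ℝ[X]} (hP : ∀ n, IsMonicGegenbauer α n (P n))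
    (m : ℕ) : gegInner α (P (m+2)) (P (m+2)) =
    (m+2)*(m+1+2*α)/(4*(m+2+α)*(m+1+α)) * gegInner α (P (m+1)) (P (m+1)) := by
  have d1 : (X * P (m+1) - P (m+2)).degree < ((m+2 : ℕ) : WithBot ℕ) := by
    rw [degree_lt_iff_coeff_zero]
    intro k hk
    obtain ⟨k, rfl⟩ : ∃ j, k = j + 1 := ⟨k - 1, by omega⟩
    rw [coeff_sub, coeff_X_mul]
    rcases hk.eq_or_lt with h | h
    · obtain rfl : k = m + 1 := by omega
      rw [coeff_top hα hP, coeff_top hα hP]; ring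
    · rw [coeff_gt hα hP _ _ (by omega), coeff_gt hα hP _ _ (by omega)]; ring
  have e1 : gegInner α (P (m+2)) (X * P (m+1)) = gegInner α (P (m+2)) (P (m+2)) := by
    have := (hP (m+2)).2.2 _ d1
    rw [G_sub_r hα] at this; linarith
  set g : ℝ := (m+2)*(m+1+2*α)/(4*(m+2+α)*(m+1+α)) with hg
  have d2 : (X * P (m+2) - P (m+3) - C g * P (m+1)).degree < ((m+1 : ℕ) : WithBot ℕ) := by
    rw [degree_lt_iff_coeff_zero]
    intro k hk
    obtain ⟨k, rfl⟩ : ∃ j, k = j + 1 := ⟨k - 1, by omega⟩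
    rw [coeff_sub, coeff_sub, coeff_X_mul, coeff_C_mul]
    obtain h | h | h | h : k = m ∨ k = m+1 ∨ k = m+2 ∨ m + 2 < k := by omega
    · subst h
      rw [coeff_sub2 hα hP, coeff_sub2 hα hP, coeff_top hα hP, hg]
      have h1 : (k+1+α : ℝ) ≠ 0 := by positivity
      have h2 : (k+2+α : ℝ) ≠ 0 := by positivity
      have h3 : (k+1+1+α : ℝ) ≠ 0 := by positivity
      push_cast
      field_simp
      ring
    · subst h
      rw [coeff_sub1 hα hP, coeff_sub1 hα hP, coeff_gt hα hP _ _ (by omega)]; ring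
    · subst h
      rw [coeff_top hα hP, coeff_top hα hP, coeff_gt hα hP _ _ (by omega)]; ring
    · rw [coeff_gt hα hP _ _ (by omega), coeff_gt hα hP _ _ (by omega),
        coeff_gt hα hP _ _ (by omega)]; ring
  have e2 := (hP (m+1)).2.2 _ d2
  have e3 : gegInner α (P (m+1)) (P (m+3)) = 0 := by
    rw [G_comm]
    apply (hP (m+3)).2.2
    rw [degree_lt_iff_coeff_zero]
    intro k hk
    exact coeff_gt hα hP _ _ (by omega)
  rw [G_sub_r hα, G_sub_r hα, e3, G_smul_r, ← G_assoc, G_comm, e1] at e2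
  linarith

noncomputable def kap (α : ℝ) (m : ℕ) : ℝ := -((m+3)*(m+2)/(4*(m+2+α)*(m+1+α)))

lemma primitive {α : ℝ} (hα : 1/2 < α) {P : ℕ → ℝ[X]} (hP : ∀ n, IsMonicGegenbauer α n (P n))
    (m : ℕ) : derivative (P (m+3) + C (kap α m) * P (m+1)) = C (m+3 : ℝ) * P (m+2) := by
  rw [← sub_eq_zero]
  by_contra hne
  set R := derivative (P (m+3) + C (kap α m) * P (m+1)) - C (m+3 : ℝ) * P (m+2) with hR
  have hR' : R = derivative (P (m+3)) + C (kap α m) * derivative (P (m+1)) - C (m+3 : ℝ) * P (m+2) := by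
    rw [hR]; simp
  have hd : R.degree < (m : WithBot ℕ) := by
    rw [degree_lt_iff_coeff_zero]
    intro k hk
    rw [hR', coeff_sub, coeff_add, coeff_C_mul, coeff_C_mul, coeff_derivative, coeff_derivative]
    obtain h | h | h | h : k = m ∨ k = m+1 ∨ k = m+2 ∨ m + 2 < k := by omega
    · subst h
      rw [coeff_sub2 hα hP, coeff_sub2 hα hP, coeff_top hα hP, kap]
      have h1 : (k+1+α : ℝ) ≠ 0 := by positivity
      have h2 : (k+2+α : ℝ) ≠ 0 := by positivity
      have h3 : (k+1+1+α : ℝ) ≠ 0 := by positivity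
      push_cast
      field_simp
      ring
    · subst h
      rw [coeff_sub1 hα hP, coeff_sub1 hα hP, coeff_gt hα hP _ _ (by omega)]; ring
    · subst h
      rw [coeff_top hα hP, coeff_top hα hP, coeff_gt hα hP _ _ (by omega)]; push_cast; ring
    · rw [coeff_gt hα hP _ _ (by omega), coeff_gt hα hP _ _ (by omega),
        coeff_gt hα hP _ _ (by omega)]; ring
  have hc : ∀ k, m ≤ k → R.coeff k = 0 := (degree_lt_iff_coeff_zero _ _).1 hd
  have hL : ∀ k, m + 1 ≤ k → (L α R).coeff k = 0 := by
    intro k hk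
    have e : L α R = derivative R - X * (X * derivative R) - C (2*α+1) * (X * R) := by
      simp only [L]; ring
    obtain ⟨k, rfl⟩ : ∃ j, k = j + 1 := ⟨k - 1, by omega⟩
    rw [e, coeff_sub, coeff_sub, coeff_C_mul]
    rcases k with _ | k
    · simp [coeff_derivative, hc 2 (by omega), hc 0 (by omega)]
    · simp [coeff_derivative, hc (k+1+1+1) (by omega), hc (k+1) (by omega)]
  have hX : ((1 - X^2) * R).degree < ((m + 2 : ℕ) : WithBot ℕ) := by
    rw [degree_lt_iff_coeff_zero]
    intro k hk
    obtain ⟨k, rfl⟩ : ∃ j, k = j + 2 := ⟨k - 2, by omega⟩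
    have e : (1 - X^2) * R = R - X * (X * R) := by ring
    rw [e]
    simp [hc (k+2) (by omega), hc k (by omega)]
  have p := G_pos hα 1 R hne
  rw [pow_one] at p
  nth_rewrite 1 [hR'] at p
  rw [G_sub hα, G_add hα, G_smul, G_smul, byparts hα, byparts hα, (hP (m+2)).2.2 _ hX,
    (hP (m+3)).2.2 _ ((degree_lt_iff_coeff_zero _ _).2 fun k hk => hL k (by omega)),
    (hP (m+1)).2.2 _ ((degree_lt_iff_coeff_zero _ _).2 fun k hk => hL k (by omega))] at p
  simp at p


lemma lower {α : ℝ} (hα : 1/2 < α) {P : ℕ → ℝ[X]} (hP : ∀ n, IsMonicGegenbauer α n (P n))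
    {lam : ℝ} (hlam : 0 < lam) {Q : ℕ → ℝ[X]}
    (hQ : ∀ n, IsMonicGegSobolev α lam n (Q n)) (m : ℕ) : lam * (m+3)^2 * gegInner α (P (m+2)) (P (m+2)) ≤
    sobInner α lam (Q (m+3)) (Q (m+3)) := by
  set r := derivative (Q (m+3)) - C (m+3 : ℝ) * P (m+2) with hr
  have hq : derivative (Q (m+3)) = C (m+3 : ℝ) * P (m+2) + r := by rw [hr]; ring
  have hd : r.degree < ((m+2 : ℕ) : WithBot ℕ) := by
    rw [degree_lt_iff_coeff_zero]
    intro k hk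
    rw [hr, coeff_sub, coeff_C_mul, coeff_derivative]
    rcases hk.eq_or_lt with h | h
    · subst h
      have := (hQ (m+3)).1.coeff_natDegree
      rw [(hQ (m+3)).2.1] at this
      rw [coeff_top hα hP, this]; push_cast; ring
    · rw [coeff_gt hα hP _ _ h, coeff_eq_zero_of_natDegree_lt (by rw [(hQ (m+3)).2.1]; omega)]
      ring
  have h0 := (hP (m+2)).2.2 _ hd
  unfold sobInner
  rw [hq, G_add hα, G_add_r hα, G_add_r hα, G_smul, G_smul_r, G_smul, G_comm α r, G_smul, h0]
  have h1 := G_nonneg hα (Q (m+3))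
  have h2 := mul_nonneg hlam.le (G_nonneg hα r)
  nlinarith

lemma upper {α : ℝ} (hα : 1/2 < α) {P : ℕ → ℝ[X]} (hP : ∀ n, IsMonicGegenbauer α n (P n))
    {lam : ℝ} (hlam : 0 < lam) {Q : ℕ → ℝ[X]}
    (hQ : ∀ n, IsMonicGegSobolev α lam n (Q n)) (m : ℕ) : sobInner α lam (Q (m+3)) (Q (m+3)) ≤
    gegInner α (P (m+3)) (P (m+3)) + (kap α m)^2 * gegInner α (P (m+1)) (P (m+1)) +
    lam * (m+3)^2 * gegInner α (P (m+2)) (P (m+2)) := by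
  set T := P (m+3) + C (kap α m) * P (m+1) with hT
  set r := T - Q (m+3) with hr
  have hq : T = Q (m+3) + r := by rw [hr]; ring
  have hd : r.degree < ((m+3 : ℕ) : WithBot ℕ) := by
    rw [degree_lt_iff_coeff_zero]
    intro k hk
    rw [hr, hT, coeff_sub, coeff_add, coeff_C_mul, coeff_gt hα hP (m+1) k (by omega)]
    rcases hk.eq_or_lt with h | h
    · subst h
      have := (hQ (m+3)).1.coeff_natDegree
      rw [(hQ (m+3)).2.1] at this
      rw [coeff_top hα hP, this]; ring
    · rw [coeff_gt hα hP _ _ h, coeff_eq_zero_of_natDegree_lt (by rw [(hQ (m+3)).2.1]; omega)]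
      ring
  have h0 := (hQ (m+3)).2.2 _ hd
  have e1 : sobInner α lam T T = gegInner α (P (m+3)) (P (m+3)) + (kap α m)^2 * gegInner α (P (m+1)) (P (m+1)) +
    lam * (m+3)^2 * gegInner α (P (m+2)) (P (m+2)) := by
    have e3 : gegInner α (P (m+3)) (P (m+1)) = 0 := by
      apply (hP (m+3)).2.2
      rw [degree_lt_iff_coeff_zero]
      intro k hk
      exact coeff_gt hα hP _ _ (by omega)
    unfold sobInner
    rw [primitive hα hP m, hT, G_add hα, G_add_r hα, G_add_r hα, G_smul, G_smul_r, G_smul,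
      G_comm α (P (m+1)) (P (m+3)), e3, G_smul_r, G_smul, G_smul_r]
    ring
  have e2 : sobInner α lam T T = sobInner α lam (Q (m+3)) (Q (m+3)) + 2 * sobInner α lam (Q (m+3)) r
      + sobInner α lam r r := by
    rw [hq]
    unfold sobInner
    rw [derivative_add, G_add hα, G_add_r hα, G_add_r hα, G_add hα, G_add_r hα, G_add_r hα,
      G_comm α r (Q (m+3)), G_comm α (derivative r) (derivative (Q (m+3)))]
    ring
  have e3 : 0 ≤ sobInner α lam r r := by
    unfold sobInner
    have := G_nonneg hα r
    have := mul_nonneg hlam.le (G_nonneg hα (derivative r))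
    linarith
  rw [h0] at e2
  linarith


lemma lim1 (a b : ℝ) : Filter.Tendsto (fun m : ℕ => ((m:ℝ)+a)/((m:ℝ)+b)) Filter.atTop (nhds 1) := by
  have := tendsto_add_mul_div_add_mul_atTop_nhds a b (1:ℝ) (one_ne_zero : (1:ℝ) ≠ 0)
  simpa [add_comm] using this

end GS

/-- Asymptotics of the connection coefficients: `d_n(α) ≅ 1/(16 λ n²)`. -/
theorem gegSobolev_connection_coeff_asymptotics (α lam : ℝ) (hα : 1/2 < α)
    (hlam : 0 < lam)
    (C Q : ℕ → Polynomial ℝ)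
    (hC : ∀ n, IsMonicGegenbauer α n (C n))
    (hQ : ∀ n, IsMonicGegSobolev α lam n (Q n)) :
    Filter.Tendsto
      (fun n : ℕ =>
        16 * lam * (n : ℝ) ^ 2 *
          (((n : ℝ) + 2) * ((n : ℝ) + 1) /
                (4 * ((n : ℝ) + α + 1) * ((n : ℝ) + α)) *
              gegInner α (C n) (C n) / sobInner α lam (Q n) (Q n)))
      Filter.atTop (nhds 1) := by
  rw [← Filter.tendsto_add_atTop_iff_nat 3]
  set g : ℕ → ℝ := fun m => (m+2)*(m+1+2*α)/(4*(m+2+α)*(m+1+α)) with hg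
  have hgpos : ∀ m, 0 < g m := fun m => by simp only [hg]; positivity
  have gl : Filter.Tendsto g Filter.atTop (nhds (1/4)) := by
    have := ((GS.lim1 2 (2+α)).mul (GS.lim1 (1+2*α) (1+α))).const_mul (1/4)
    rw [mul_one, mul_one] at this
    refine this.congr fun m => ?_
    simp only [hg]
    have h1 : (m+1+α : ℝ) ≠ 0 := by positivity
    have h2 : (m+2+α : ℝ) ≠ 0 := by positivity
    have h3 : (m+(1+α) : ℝ) ≠ 0 := by positivity
    have h4 : (m+(2+α) : ℝ) ≠ 0 := by positivity
    field_simp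
    ring
  have kl : Filter.Tendsto (GS.kap α) Filter.atTop (nhds (-(1/4))) := by
    have := ((GS.lim1 3 (2+α)).mul (GS.lim1 2 (1+α))).const_mul (-(1/4))
    rw [mul_one, mul_one] at this
    refine this.congr fun m => ?_
    simp only [GS.kap]
    have h1 : (m+1+α : ℝ) ≠ 0 := by positivity
    have h2 : (m+2+α : ℝ) ≠ 0 := by positivity
    have h3 : (m+(1+α) : ℝ) ≠ 0 := by positivity
    have h4 : (m+(2+α) : ℝ) ≠ 0 := by positivity
    field_simp
    ring
  have xl : Filter.Tendsto (fun m : ℕ => ((m:ℝ)+3+2)*((m:ℝ)+3+1)/(4*((m:ℝ)+3+α+1)*((m:ℝ)+3+α)))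
      Filter.atTop (nhds (1/4)) := by
    have := ((GS.lim1 5 (4+α)).mul (GS.lim1 4 (3+α))).const_mul (1/4)
    rw [mul_one, mul_one] at this
    refine this.congr fun m => ?_
    have h1 : (m+3+α+1 : ℝ) ≠ 0 := by positivity
    have h2 : (m+3+α : ℝ) ≠ 0 := by positivity
    have h3 : (m+(3+α) : ℝ) ≠ 0 := by positivity
    have h4 : (m+(4+α) : ℝ) ≠ 0 := by positivity
    field_simp
    ring
  set s : ℕ → ℝ := fun m => sobInner α lam (Q (m+3)) (Q (m+3)) /
    (lam * (m+3)^2 * gegInner α (C (m+2)) (C (m+2))) with hs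
  have hh := GS.h_pos hα hC
  have hden : ∀ m : ℕ, 0 < lam * ((m:ℝ)+3)^2 * gegInner α (C (m+2)) (C (m+2)) := fun m => by
    have := hh (m+2); positivity
  have g1 : ∀ m, gegInner α (C (m+2)) (C (m+2)) = g m * gegInner α (C (m+1)) (C (m+1)) :=
    fun m => GS.gam hα hC m
  have s1 : ∀ m, 1 ≤ s m := fun m => by
    simp only [hs]
    rw [le_div_iff₀ (hden m), one_mul]
    exact GS.lower hα hC hlam hQ m
  have s2 : ∀ m, s m ≤ 1 + (g (m+1) + (GS.kap α m)^2 / g m) * (1 / lam) * (1/((m:ℝ)+3))^2 := fun m => by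
    simp only [hs]
    rw [div_le_iff₀ (hden m)]
    refine (GS.upper hα hC hlam hQ m).trans (le_of_eq ?_)
    rw [g1 (m+1), show m + 1 + 1 = m + 2 from rfl, g1 m]
    have := (hgpos m).ne'
    have h3 : (m+3 : ℝ) ≠ 0 := by positivity
    field_simp
    ring
  have zl : Filter.Tendsto (fun m : ℕ => 1/((m:ℝ)+3)) Filter.atTop (nhds 0) := by
    have := (Filter.tendsto_add_atTop_iff_nat 3).2 (tendsto_one_div_atTop_nhds_zero_nat (𝕜 := ℝ))
    simpa using this
  have sl : Filter.Tendsto s Filter.atTop (nhds 1) := by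
    refine tendsto_of_tendsto_of_tendsto_of_le_of_le tendsto_const_nhds ?_ s1 s2
    have := ((((Filter.tendsto_add_atTop_iff_nat 1).2 gl).add ((kl.pow 2).div gl (by norm_num))).mul_const
      (1/lam)).mul (zl.pow 2)
    simpa using this.const_add 1
  have := ((xl.mul ((Filter.tendsto_add_atTop_iff_nat 1).2 gl)).const_mul 16).div sl one_ne_zero
  norm_num at this
  refine this.congr fun m => ?_
  have hsp : 0 < sobInner α lam (Q (m+3)) (Q (m+3)) :=
    (hden m).trans_le (GS.lower hα hC hlam hQ m)
  simp only [Pi.div_apply, hs]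
  rw [g1 (m+1), show m + 1 + 1 = m + 2 from rfl]
  have := (hh (m+2)).ne'
  have h3 : (m+3 : ℝ) ≠ 0 := by positivity
  have h1 : (m+3+α+1 : ℝ) ≠ 0 := by positivity
  have h2 : (m+3+α : ℝ) ≠ 0 := by positivity
  push_cast
  have := hsp.ne'
  generalize g (m+1) = y
  field_simp
end
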